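/- arXiv:math/0007191 — 2 statements merged into one kernel-verified Lean document; each statement's English description precedes it below -/
import Mathlib

section
/- Suppose the vertex set I of Q is a disjoint union 𝒥 ∪ 𝒦, and write α = α_𝒥 + α_𝒦 where α_𝒥, α_𝒦 ∈ ℕ^I have support in 𝒥 and 𝒦 respectively. If the dimension vector of every composition factor of every Π^λ-module of dimension vector α has support contained either in 𝒥 or in 𝒦, then there is an isomorphism of varieties N(λ,α) ≅ N(λ,α_𝒥) × N(λ,α_𝒦). -/
open scoped BigOperators

noncomputable section

/-- A quiver with a finite vertex set `I` and a finite arrow set `A`;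
`h a` and `t a` are the head and the tail of the arrow `a`. -/
structure FinQuiver where
  I : Type
  [fintypeI : Fintype I]
  [decEqI : DecidableEq I]
  A : Type
  [fintypeA : Fintype A]
  h : A → I
  t : A → I

attribute [instance] FinQuiver.fintypeI FinQuiver.decEqI FinQuiver.fintypeA

namespace FinQuiver

variable (Q : FinQuiver)

/-- Arrows of the double quiver `Q̄` : every arrow `a : i → j` of `Q` (as `Sum.inl a`)
together with a reverse arrow `a* : j → i` (as `Sum.inr a`). -/
@[reducible] def DA : Type := Q.A ⊕ Q.A

instance : Fintype Q.DA := inferInstanceAs (Fintype (Q.A ⊕ Q.A))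

/-- Head of an arrow of the double quiver. -/
@[reducible] def dh : Q.DA → Q.I := fun a => match a with
  | Sum.inl a => Q.h a
  | Sum.inr a => Q.t a

/-- Tail of an arrow of the double quiver. -/
@[reducible] def dt : Q.DA → Q.I := fun a => match a with
  | Sum.inl a => Q.t a
  | Sum.inr a => Q.h a

/-- The symmetric bilinear form
`(α,β) = ∑_{i∈I} 2 α_i β_i − ∑_{a∈Q̄} α_{h(a)} β_{t(a)}` on `ℤ^I`. -/
def bil (α β : Q.I → ℤ) : ℤ :=
  (∑ i, 2 * α i * β i) - ∑ a : Q.DA, α (Q.dh a) * β (Q.dt a)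

/-- `p(α) = 1 − q(α) = 1 − α·α + ∑_{a ∈ Q} α_{t(a)} α_{h(a)}`. -/
def pp (α : Q.I → ℤ) : ℤ :=
  1 - (∑ i, α i * α i) + ∑ a : Q.A, α (Q.t a) * α (Q.h a)

/-- The coordinate vector `ε_i` at a vertex `i`. -/
def ev (i : Q.I) : Q.I → ℤ := fun j => if j = i then 1 else 0

/-- The coordinate vector of a vertex, as a vector of natural numbers. -/
def evN (i : Q.I) : Q.I → ℕ := fun j => if j = i then 1 else 0

/-- A vertex is loopfree if no arrow has both its head and its tail there. -/
def Loopfree (i : Q.I) : Prop := ∀ a : Q.A, ¬ (Q.h a = i ∧ Q.t a = i)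

/-- The reflection `s_i(α) = α − (α,ε_i) ε_i` at a (loopfree) vertex `i`. -/
def refl (i : Q.I) (α : Q.I → ℤ) : Q.I → ℤ := α - Q.bil α (Q.ev i) • Q.ev i

/-- Two vertices are joined by some arrow. -/
def Adj (i j : Q.I) : Prop :=
  ∃ a : Q.A, (Q.h a = i ∧ Q.t a = j) ∨ (Q.h a = j ∧ Q.t a = i)

/-- The quiver is connected. -/
def Connected : Prop := ∀ i j : Q.I, Relation.ReflTransGen Q.Adj i j

/-- The support of the vector `α` is connected in `Q`. -/
def SuppConnected (α : Q.I → ℤ) : Prop :=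
  ∀ i j : Q.I, α i ≠ 0 → α j ≠ 0 →
    Relation.ReflTransGen (fun x y => α x ≠ 0 ∧ α y ≠ 0 ∧ Q.Adj x y) i j

/-- The fundamental region: nonzero nonnegative vectors with connected support
such that `(α, ε_i) ≤ 0` for every vertex `i`. -/
def InFund (α : Q.I → ℤ) : Prop :=
  α ≠ 0 ∧ (∀ i, 0 ≤ α i) ∧ Q.SuppConnected α ∧ ∀ i, Q.bil α (Q.ev i) ≤ 0

/-- The roots of the Kac root system attached to `Q` : the real roots form the orbit
of the simple roots (coordinate vectors at loopfree vertices) under the reflections at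
loopfree vertices, and the imaginary roots form the orbit of `±(fundamental region)`
under these reflections. -/
inductive IsRoot : (Q.I → ℤ) → Prop
  | simple (i : Q.I) (hi : Q.Loopfree i) : IsRoot (Q.ev i)
  | fund (α : Q.I → ℤ) (hα : Q.InFund α) : IsRoot α
  | neg_fund (α : Q.I → ℤ) (hα : Q.InFund α) : IsRoot (-α)
  | reflect (i : Q.I) (hi : Q.Loopfree i) (α : Q.I → ℤ) (hα : IsRoot α) :
      IsRoot (Q.refl i α)

/-- Positive roots: roots all of whose components are nonnegative. -/
def IsPosRoot (α : Q.I → ℤ) : Prop := Q.IsRoot α ∧ (∀ i, 0 ≤ α i) ∧ α ≠ 0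

/-- The Tits form is positive semidefinite. -/
def PosSemidef : Prop := ∀ α : Q.I → ℤ, 0 ≤ Q.bil α α

/-- The Tits form is positive definite. -/
def PosDef : Prop := Q.PosSemidef ∧ ∀ α : Q.I → ℤ, Q.bil α α = 0 → α = 0

/-- Dynkin quivers: connected, with positive definite Tits form. -/
def IsDynkin : Prop := Q.Connected ∧ Q.PosDef

/-- Extended Dynkin quivers: connected, with positive semidefinite but not
positive definite Tits form. -/
def IsExtDynkin : Prop := Q.Connected ∧ Q.PosSemidef ∧ ¬ Q.PosDef

/-- `δ` is the minimal positive imaginary root of an extended Dynkin quiver: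
the minimal nonzero nonnegative vector in the radical of the Tits form. -/
def IsMinImag (δ : Q.I → ℤ) : Prop :=
  (∀ i, 0 ≤ δ i) ∧ δ ≠ 0 ∧ (∀ i, Q.bil δ (Q.ev i) = 0) ∧
    ∀ β : Q.I → ℤ, (∀ i, 0 ≤ β i) → β ≠ 0 → (∀ i, Q.bil β (Q.ev i) = 0) →
      ∀ i, δ i ≤ β i

/-- The subquiver of `Q` on a subset `S` of vertices and a subset `B` of arrows. -/
def restrict (S : Set Q.I) (B : Set Q.A) (hh : ∀ a ∈ B, Q.h a ∈ S)
    (ht : ∀ a ∈ B, Q.t a ∈ S) : FinQuiver :=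
  { I := S
    fintypeI := Fintype.ofFinite S
    decEqI := Classical.decEq _
    A := B
    fintypeA := Fintype.ofFinite B
    h := fun a => ⟨Q.h a.1, hh a.1 a.2⟩
    t := fun a => ⟨Q.t a.1, ht a.1 a.2⟩ }

/-- The support quiver of a vector: the full subquiver on the support of `β`. -/
def suppQuiver (β : Q.I → ℤ) : FinQuiver :=
  Q.restrict {i | β i ≠ 0} {a | β (Q.h a) ≠ 0 ∧ β (Q.t a) ≠ 0}
    (fun _ ha => ha.1) (fun _ ha => ha.2)

/-- A dimension vector (of natural numbers), viewed in `ℤ^I`. -/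
def toZ (α : Q.I → ℕ) : Q.I → ℤ := fun i => (α i : ℤ)

/-- An oriented cycle in the double quiver `Q̄`, consisting of `n+1` arrows,
the tail of each arrow being the head of the (cyclically) next one. -/
structure Cyc (Q' : FinQuiver) where
  n : ℕ
  ar : Fin (n + 1) → Q'.DA
  compat : ∀ i : Fin (n + 1), Q'.dt (ar i) = Q'.dh (ar (i + 1))

section WithField

variable (K : Type) [Field K]

/-- `λ·α = ∑_i λ_i α_i`. -/
def pair (l : Q.I → K) (α : Q.I → ℤ) : K := ∑ i, l i * (α i : K)

/-- `R_λ^+`, the set of positive roots `α` with `λ·α = 0`. -/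
def Rplus (l : Q.I → K) : Set (Q.I → ℤ) :=
  {α | Q.IsPosRoot α ∧ Q.pair K l α = 0}

/-- `ℕ R_λ^+`, the set of sums (including the empty sum `0`) of elements of `R_λ^+`. -/
def NRplus (l : Q.I → K) : Set (Q.I → ℤ) :=
  (AddSubmonoid.closure (Q.Rplus K l) : AddSubmonoid (Q.I → ℤ))

/-- `Σ_λ` : the elements `α ∈ R_λ^+` with `p(α) > ∑ p(β⁽ᵗ⁾)` for every decomposition
of `α` as a sum of at least two elements `β⁽ᵗ⁾` of `R_λ^+`. -/
def SigmaSet (l : Q.I → K) : Set (Q.I → ℤ) :=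
  {α | α ∈ Q.Rplus K l ∧
    ∀ (n : ℕ) (β : Fin n → (Q.I → ℤ)), 2 ≤ n → (∀ j, β j ∈ Q.Rplus K l) →
      α = ∑ j, β j → (∑ j, Q.pp (β j)) < Q.pp α}

/-- The dual reflection `r_i(λ)_j = λ_j − (ε_i,ε_j) λ_i`. -/
def coRefl (i : Q.I) (l : Q.I → K) : Q.I → K :=
  fun j => l j - (Q.bil (Q.ev i) (Q.ev j) : ℤ) * l i

/-- A single admissible reflection applied to the pair `(λ, α)`:
a reflection at a loopfree vertex `i` with `λ_i ≠ 0`. -/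
def AdmStep (x y : (Q.I → K) × (Q.I → ℤ)) : Prop :=
  ∃ i : Q.I, Q.Loopfree i ∧ x.1 i ≠ 0 ∧ y.1 = Q.coRefl K i x.1 ∧ y.2 = Q.refl i x.2

/-- `(ν,β)` is obtained from `(λ,α)` by a sequence of admissible reflections:
the two pairs lie in the same class of the equivalence relation generated by
admissible reflections. -/
def AdmEquiv (x y : (Q.I → K) × (Q.I → ℤ)) : Prop :=
  Relation.EqvGen (Q.AdmStep K) x y

/-- The space `Rep(Q̄,α)` of representations of the double quiver. -/
def Rep (α : Q.I → ℕ) : Type :=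
  ∀ a : Q.DA, Matrix (Fin (α (Q.dh a))) (Fin (α (Q.dt a))) K

/-- The moment map
`μ_α(x)_i = ∑_{a∈Q, h(a)=i} x_a x_{a*} − ∑_{a∈Q, t(a)=i} x_{a*} x_a`. -/
def moment (α : Q.I → ℕ) (x : Q.Rep K α) (i : Q.I) :
    Matrix (Fin (α i)) (Fin (α i)) K :=
  (∑ a : Q.A, if h : Q.h a = i then
      (x (Sum.inl a) * x (Sum.inr a)).submatrix
        (Fin.cast (congrArg α h).symm) (Fin.cast (congrArg α h).symm)
    else 0)
  - ∑ a : Q.A, if h : Q.t a = i then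
      (x (Sum.inr a) * x (Sum.inl a)).submatrix
        (Fin.cast (congrArg α h).symm) (Fin.cast (congrArg α h).symm)
    else 0

/-- The fibre `μ_α^{-1}(λ)` of the moment map over (the central element
corresponding to) `λ`. -/
def MomentFiber (l : Q.I → K) (α : Q.I → ℕ) : Set (Q.Rep K α) :=
  {x | ∀ i : Q.I, Q.moment K α x i = l i • (1 : Matrix (Fin (α i)) (Fin (α i)) K)}

/-- The group `∏_i GL(α_i,K)`; it acts on `Rep(Q̄,α)` by conjugation, with the same
orbits and the same invariant functions as `G(α) = (∏_i GL(α_i,K))/K^*`. -/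
def Gl (α : Q.I → ℕ) : Type := ∀ i : Q.I, Matrix.GeneralLinearGroup (Fin (α i)) K

/-- The conjugation action of `∏_i GL(α_i,K)` on `Rep(Q̄,α)`. -/
def glAct (α : Q.I → ℕ) (g : Q.Gl K α) (x : Q.Rep K α) : Q.Rep K α :=
  fun a => (g (Q.dh a) : Matrix (Fin (α (Q.dh a))) (Fin (α (Q.dh a))) K) * x a *
    (((g (Q.dt a))⁻¹ : Matrix.GeneralLinearGroup (Fin (α (Q.dt a))) K) :
      Matrix (Fin (α (Q.dt a))) (Fin (α (Q.dt a))) K)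

/-- Coordinates on `Rep(Q̄,α)`: matrix entries. -/
def Coords (α : Q.I → ℕ) : Type :=
  Σ a : Q.DA, Fin (α (Q.dh a)) × Fin (α (Q.dt a))

/-- The coordinate ring `K[V]` of a subset `V` of `Rep(Q̄,α)` : the algebra of
`K`-valued functions on `V` which are restrictions of polynomial functions. -/
def fnRing (α : Q.I → ℕ) (V : Set (Q.Rep K α)) : Subalgebra K (↥V → K) :=
  (MvPolynomial.aeval
    (fun c : Q.Coords α => fun v : ↥V => v.1 c.1 c.2.1 c.2.2) :
    MvPolynomial (Q.Coords α) K →ₐ[K] (↥V → K)).range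

end WithField

end FinQuiver

/-- The subalgebra of functions invariant under a relation (e.g. the orbit
relation of a group action). -/
def relInv (K : Type) [Field K] {V : Type} (R : V → V → Prop) :
    Subalgebra K (V → K) where
  carrier := {f | ∀ x y : V, R x y → f x = f y}
  mul_mem' := by
    intro f g hf hg x y hxy
    simp only [Pi.mul_apply, hf x y hxy, hg x y hxy]
  one_mem' := fun x y _ => rfl
  add_mem' := by
    intro f g hf hg x y hxy
    simp only [Pi.add_apply, hf x y hxy, hg x y hxy]
  zero_mem' := fun x y _ => rfl
  algebraMap_mem' := fun c x y _ => rfl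

namespace FinQuiver

variable (Q : FinQuiver) (K : Type) [Field K]

/-- The coordinate ring of the Marsden–Weinstein reduction
`N(λ,α) = μ_α^{-1}(λ) ⫽ G(α)` : the `G(α)`-invariant functions in the coordinate
ring of `μ_α^{-1}(λ)`.  Two such reductions are isomorphic as (affine) varieties
exactly when these `K`-algebras are isomorphic. -/
def InvRing (l : Q.I → K) (α : Q.I → ℕ) :
    Subalgebra K (↥(Q.MomentFiber K l α) → K) :=
  Q.fnRing K α (Q.MomentFiber K l α) ⊓
    relInv K (fun x y : ↥(Q.MomentFiber K l α) =>
      ∃ g : Q.Gl K α, y.1 = Q.glAct K α g x.1)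

/-- Index type for a product `∏_t X_t^{m_t}`. -/
@[reducible] def SymIdx (s : ℕ) (m : Fin s → ℕ) : Type := Σ t : Fin s, Fin (m t)

/-- The product `∏_{t} Rep(Q̄, d_t)^{m_t}` of representation spaces. -/
def SymRep (s : ℕ) (m : Fin s → ℕ) (d : Fin s → (Q.I → ℕ)) : Type :=
  ∀ p : SymIdx s m, Q.Rep K (d p.1)

/-- The product `∏_t μ_{d_t}^{-1}(λ)^{m_t}` of moment map fibres. -/
def SymFiber (s : ℕ) (m : Fin s → ℕ) (d : Fin s → (Q.I → ℕ)) (l : Q.I → K) :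
    Set (Q.SymRep K s m d) :=
  {x | ∀ p : SymIdx s m, x p ∈ Q.MomentFiber K l (d p.1)}

/-- Polynomial functions on the product of fibres. -/
def symFnRing (s : ℕ) (m : Fin s → ℕ) (d : Fin s → (Q.I → ℕ)) (l : Q.I → K) :
    Subalgebra K (↥(Q.SymFiber K s m d l) → K) :=
  (MvPolynomial.aeval
    (fun c : Σ p : SymIdx s m, Q.Coords (d p.1) =>
      fun v : ↥(Q.SymFiber K s m d l) => v.1 c.1 c.2.1 c.2.2.1 c.2.2.2) :
    MvPolynomial (Σ p : SymIdx s m, Q.Coords (d p.1)) K →ₐ[K]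
      (↥(Q.SymFiber K s m d l) → K)).range

/-- The componentwise action of the product of the groups `∏ GL(d_t)^{m_t}`. -/
def symGlAct (s : ℕ) (m : Fin s → ℕ) (d : Fin s → (Q.I → ℕ))
    (g : ∀ p : SymIdx s m, Q.Gl K (d p.1)) (x : Q.SymRep K s m d) :
    Q.SymRep K s m d :=
  fun p => Q.glAct K (d p.1) (g p) (x p)

/-- The action of `∏_t S_{m_t}` permuting the factors of each `X_t^{m_t}`. -/
def symPermAct (s : ℕ) (m : Fin s → ℕ) (d : Fin s → (Q.I → ℕ))
    (π : ∀ t : Fin s, Equiv.Perm (Fin (m t))) (x : Q.SymRep K s m d) :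
    Q.SymRep K s m d :=
  fun p => x ⟨p.1, π p.1 p.2⟩

/-- The coordinate ring of the product of symmetric products
`∏_t S^{m_t} N(λ, d_t)` of Marsden–Weinstein reductions: functions on
`∏_t μ_{d_t}^{-1}(λ)^{m_t}` which are polynomial, invariant under all the groups
`G(d_t)` acting on the separate factors, and symmetric under permutations of the
`m_t` factors of each type `t`. -/
def SymInvRing (s : ℕ) (m : Fin s → ℕ) (d : Fin s → (Q.I → ℕ)) (l : Q.I → K) :
    Subalgebra K (↥(Q.SymFiber K s m d l) → K) :=
  Q.symFnRing K s m d l ⊓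
    relInv K (fun x y : ↥(Q.SymFiber K s m d l) =>
      ∃ g : ∀ p : SymIdx s m, Q.Gl K (d p.1), y.1 = Q.symGlAct K s m d g x.1) ⊓
    relInv K (fun x y : ↥(Q.SymFiber K s m d l) =>
      ∃ π : ∀ t : Fin s, Equiv.Perm (Fin (m t)), y.1 = Q.symPermAct K s m d π x.1)

/-- The trace function `tr_p` of an oriented cycle `p` in `Q̄` :
`tr_p(x) = tr(x_{a_1} ⋯ x_{a_ℓ})`, written out via matrix entries. -/
def cycTr (α : Q.I → ℕ) (p : Q.Cyc) (x : Q.Rep K α) : K :=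
  ∑ c : ∀ i : Fin (p.n + 1), Fin (α (Q.dh (p.ar i))),
    ∏ i : Fin (p.n + 1),
      x (p.ar i) (c i) (Fin.cast (congrArg α (p.compat i)).symm (c (i + 1)))

/-- `U` is a subrepresentation of the `Π^λ`-module given by the point
`x ∈ Rep(Q̄,α)` : a collection of subspaces stable under all the maps `x_a`. -/
def SubRep (α : Q.I → ℕ) (x : Q.Rep K α)
    (U : ∀ i : Q.I, Submodule K (Fin (α i) → K)) : Prop :=
  ∀ a : Q.DA, ∀ v ∈ U (Q.dt a), (x a).mulVec v ∈ U (Q.dh a)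

/-- The module given by `x` has the simple module `S_{i₀}` (dimension vector
`ε_{i₀}`, all arrows acting as zero) as a composition factor: it has a subquotient
of dimension vector `ε_{i₀}` on which all arrows act as zero. -/
def HasSFactor (α : Q.I → ℕ) (i0 : Q.I) (x : Q.Rep K α) : Prop :=
  ∃ U W : ∀ i : Q.I, Submodule K (Fin (α i) → K),
    Q.SubRep K α x U ∧ Q.SubRep K α x W ∧ (∀ i, U i ≤ W i) ∧
    (∀ i, Module.finrank K (W i) =
      Module.finrank K (U i) + (if i = i0 then 1 else 0)) ∧
    (∀ a : Q.DA, Q.dh a = i0 → Q.dt a = i0 →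
      ∀ v ∈ W (Q.dt a), (x a).mulVec v ∈ U (Q.dh a))

/-- `W/U` is a simple subquotient of the module given by `x`; the simple
subquotients of a module are, up to isomorphism, exactly its composition factors. -/
def SimpleSubquot (α : Q.I → ℕ) (x : Q.Rep K α)
    (U W : ∀ i : Q.I, Submodule K (Fin (α i) → K)) : Prop :=
  Q.SubRep K α x U ∧ Q.SubRep K α x W ∧ (∀ i, U i ≤ W i) ∧ U ≠ W ∧
    ∀ V : ∀ i : Q.I, Submodule K (Fin (α i) → K),
      Q.SubRep K α x V → (∀ i, U i ≤ V i) → (∀ i, V i ≤ W i) → V = U ∨ V = W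

/-- The direct sum map `∏_{j=1}^m Rep(Q̄,δ) → Rep(Q̄,mδ)` (block diagonal). -/
def dsMap (δ : Q.I → ℕ) (m : ℕ) (y : Fin m → Q.Rep K δ) :
    Q.Rep K (fun i => m * δ i) :=
  fun a => Matrix.of fun r c =>
    if (finProdFinEquiv.symm r).1 = (finProdFinEquiv.symm c).1 then
      y (finProdFinEquiv.symm r).1 a (finProdFinEquiv.symm r).2
        (finProdFinEquiv.symm c).2
    else 0

end FinQuiver


set_option linter.unusedSectionVars false
set_option linter.unusedSimpArgs false

namespace Reyn

open MvPolynomial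

section pairing
variable {σ : Type} [DecidableEq σ] {K : Type} [Field K]

/-- the factorial of a multi-index -/
def mfact (m : σ →₀ ℕ) : ℕ := m.prod fun _ k => k.factorial

/-- The apolar pairing of polynomials. -/
def B (P Q : MvPolynomial σ K) : K :=
  ∑ m ∈ P.support, coeff m P * coeff m Q * (mfact m : K)

theorem B_eq_of_subset (P Q : MvPolynomial σ K) (s : Finset (σ →₀ ℕ)) (hs : P.support ⊆ s) :
    B P Q = ∑ m ∈ s, coeff m P * coeff m Q * (mfact m : K) := by
  apply Finset.sum_subset hs
  intro m _ hm
  simp [notMem_support_iff.mp hm]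

theorem B_add_left (P P' Q : MvPolynomial σ K) : B (P + P') Q = B P Q + B P' Q := by
  classical
  rw [B_eq_of_subset (P + P') Q (P.support ∪ P'.support) support_add,
    B_eq_of_subset P Q (P.support ∪ P'.support) Finset.subset_union_left,
    B_eq_of_subset P' Q (P.support ∪ P'.support) Finset.subset_union_right,
    ← Finset.sum_add_distrib]
  refine Finset.sum_congr rfl fun m _ => ?_
  rw [coeff_add]; ring

theorem B_add_right (P Q Q' : MvPolynomial σ K) : B P (Q + Q') = B P Q + B P Q' := by
  simp only [B, ← Finset.sum_add_distrib, coeff_add]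
  refine Finset.sum_congr rfl fun m _ => ?_
  ring

theorem B_C_mul_left (c : K) (P Q : MvPolynomial σ K) : B (C c * P) Q = c * B P Q := by
  rw [B_eq_of_subset (C c * P) Q P.support, B, Finset.mul_sum]
  · refine Finset.sum_congr rfl fun m _ => ?_
    rw [coeff_C_mul]; ring
  · intro m hm
    rw [mem_support_iff] at hm ⊢
    intro h
    apply hm
    rw [coeff_C_mul, h, mul_zero]

theorem B_C_mul_right (c : K) (P Q : MvPolynomial σ K) : B P (C c * Q) = c * B P Q := by
  rw [B, B, Finset.mul_sum]
  refine Finset.sum_congr rfl fun m _ => ?_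
  rw [coeff_C_mul]; ring

theorem B_zero_left (Q : MvPolynomial σ K) : B 0 Q = 0 := by simp [B]
theorem B_zero_right (Q : MvPolynomial σ K) : B Q 0 = 0 := by simp [B]

theorem B_sum_left {τ : Type} (s : Finset τ) (P : τ → MvPolynomial σ K) (Q : MvPolynomial σ K) :
    B (∑ i ∈ s, P i) Q = ∑ i ∈ s, B (P i) Q := by
  classical
  induction s using Finset.induction_on with
  | empty => simp [B_zero_left]
  | insert a s ha ih => rw [Finset.sum_insert ha, Finset.sum_insert ha, B_add_left, ih]

theorem B_sum_right {τ : Type} (s : Finset τ) (P : τ → MvPolynomial σ K) (Q : MvPolynomial σ K) :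
    B Q (∑ i ∈ s, P i) = ∑ i ∈ s, B Q (P i) := by
  classical
  induction s using Finset.induction_on with
  | empty => simp [B_zero_right]
  | insert a s ha ih => rw [Finset.sum_insert ha, Finset.sum_insert ha, B_add_right, ih]

theorem B_monomial (m m' : σ →₀ ℕ) (a b : K) :
    B (monomial m a) (monomial m' b) = if m' = m then a * b * (mfact m : K) else 0 := by
  rw [B_eq_of_subset _ _ {m} support_monomial_subset]
  by_cases h : m' = m
  · subst h; simp
  · simp [coeff_monomial, h]

theorem mfact_add_single (m : σ →₀ ℕ) (i : σ) :
    mfact (m + Finsupp.single i 1) = (m i + 1) * mfact m := by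
  classical
  have key : ∀ m : σ →₀ ℕ, mfact m = ∏ j ∈ insert i m.support, (m j).factorial := by
    intro m
    rw [mfact, Finsupp.prod]
    apply Finset.prod_subset (Finset.subset_insert _ _)
    intro x _ hx
    simp [Finsupp.notMem_support_iff.mp hx]
  have hs : insert i (m + Finsupp.single i 1).support = insert i m.support := by
    ext j
    by_cases h : j = i
    · simp [h]
    · simp [h, Finsupp.single_apply, Ne.symm h]
  rw [key, key, hs, ← Finset.mul_prod_erase _ _ (Finset.mem_insert_self i _),
    ← Finset.mul_prod_erase _ _ (Finset.mem_insert_self i m.support), ← mul_assoc]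
  congr 1
  · simp [Nat.factorial_succ]
  · apply Finset.prod_congr rfl
    intro j hj
    have : j ≠ i := Finset.ne_of_mem_erase hj
    simp [Finsupp.single_apply, this.symm]

theorem B_X_mul (i : σ) (P Q : MvPolynomial σ K) : B (X i * P) Q = B P (pderiv i Q) := by
  induction P using MvPolynomial.induction_on' with
  | add p q hp hq => rw [mul_add, B_add_left, B_add_left, hp, hq]
  | monomial m a =>
    induction Q using MvPolynomial.induction_on' with
    | add p q hp hq => rw [map_add, B_add_right, B_add_right, hp, hq]
    | monomial m' b =>
      rw [pderiv_monomial, X, monomial_mul, B_monomial, B_monomial, one_mul]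
      by_cases h : m' = Finsupp.single i 1 + m
      · subst h
        rw [if_pos rfl, if_pos (by simp), add_comm, mfact_add_single]
        simp
        ring
      · rw [if_neg h]
        by_cases h0 : m' i = 0
        · simp [h0]
        · rw [if_neg]
          rintro rfl
          apply h
          ext j
          by_cases hj : i = j
          · subst hj; simp; omega
          · simp [Finsupp.single_apply, hj]

theorem B_C_left (c : K) (Q : MvPolynomial σ K) : B (C c) Q = c * constantCoeff Q := by
  have : (C c : MvPolynomial σ K) = monomial 0 c := rfl
  rw [this, B_eq_of_subset _ _ {0} support_monomial_subset]
  simp [mfact, constantCoeff_eq]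

theorem B_self_ne_zero [CharZero K] (P : MvPolynomial σ ℤ) (hP : P ≠ 0) :
    B (map (Int.castRingHom K) P) (map (Int.castRingHom K) P) ≠ 0 := by
  rw [B_eq_of_subset _ _ P.support (support_map_subset _ _)]
  have : (∑ m ∈ P.support, coeff m (map (Int.castRingHom K) P) *
      coeff m (map (Int.castRingHom K) P) * (mfact m : K)) =
      ((∑ m ∈ P.support, coeff m P * coeff m P * (mfact m : ℤ) : ℤ) : K) := by
    push_cast
    refine Finset.sum_congr rfl fun m _ => ?_
    simp [coeff_map]
  rw [this, Int.cast_ne_zero]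
  apply ne_of_gt
  apply Finset.sum_pos
  · intro m hm
    have h1 : coeff m P ≠ 0 := mem_support_iff.mp hm
    have h2 : 0 < mfact m := Finset.prod_pos fun i _ => Nat.factorial_pos _
    have h3 : 0 < coeff m P * coeff m P := mul_self_pos.mpr h1
    positivity
  · rwa [Finset.nonempty_iff_ne_empty, Ne, support_eq_empty]

end pairing

section group
variable {ι : Type} [Fintype ι] [DecidableEq ι] (n : ι → ℕ) (K : Type) [Field K]

/-- matrix coordinates on the group -/
abbrev GIdx : Type := Σ i : ι, Fin (n i) × Fin (n i)

/-- generic matrix -/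
def gen (R : Type) [CommRing R] (i : ι) :
    Matrix (Fin (n i)) (Fin (n i)) (MvPolynomial (GIdx n) R) :=
  Matrix.of fun r s => X ⟨i, r, s⟩

/-- product of the determinants -/
def DD (R : Type) [CommRing R] : MvPolynomial (GIdx n) R := ∏ i, (gen n R i).det

/-- right translation by `h` -/
def rtr (h : ∀ i, Matrix (Fin (n i)) (Fin (n i)) K) :
    MvPolynomial (GIdx n) K →ₐ[K] MvPolynomial (GIdx n) K :=
  aeval fun p => ∑ u, C (h p.1 u p.2.2) * X ⟨p.1, p.2.1, u⟩

variable {K}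

theorem rtr_X (h : ∀ i, Matrix (Fin (n i)) (Fin (n i)) K) (p : GIdx n) :
    rtr n K h (X p) = ∑ u, C (h p.1 u p.2.2) * X ⟨p.1, p.2.1, u⟩ := by
  simp [rtr]

theorem pderiv_rtr (h : ∀ i, Matrix (Fin (n i)) (Fin (n i)) K) (p : GIdx n)
    (P : MvPolynomial (GIdx n) K) :
    pderiv p (rtr n K h P) =
      ∑ u, C (h p.1 p.2.2 u) * rtr n K h (pderiv ⟨p.1, p.2.1, u⟩ P) := by
  induction P using MvPolynomial.induction_on with
  | C a => simp [rtr]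
  | add P Q hP hQ =>
    simp only [map_add, hP, hQ, mul_add, Finset.sum_add_distrib]
  | mul_X P q hP =>
    have hX : pderiv p (rtr n K h (X q)) =
        ∑ u, C (h p.1 p.2.2 u) * rtr n K h (pderiv ⟨p.1, p.2.1, u⟩ (X q)) := by
      obtain ⟨i, r, s⟩ := p
      obtain ⟨j, r', s'⟩ := q
      rw [rtr_X]
      simp only [map_sum, pderiv_C_mul, pderiv_X, Pi.single_apply, smul_eq_C_mul, Sigma.mk.injEq]
      by_cases hij : j = i
      · subst hij
        by_cases hr : r' = r
        · subst hr
          simp [apply_ite]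
        · simp [hr, Ne.symm hr]
      · simp [hij]
    simp only [map_mul, pderiv_mul, hP, hX, map_add, Finset.sum_mul, Finset.mul_sum, mul_add,
      Finset.sum_add_distrib]
    congr 1 <;> refine Finset.sum_congr rfl fun u _ => by ring

theorem constantCoeff_rtr (h : ∀ i, Matrix (Fin (n i)) (Fin (n i)) K)
    (P : MvPolynomial (GIdx n) K) : constantCoeff (rtr n K h P) = constantCoeff P := by
  induction P using MvPolynomial.induction_on with
  | C a => simp [rtr]
  | add P Q hP hQ => simp only [map_add, hP, hQ]
  | mul_X P q hP => simp [rtr_X]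

theorem B_rtr (h : ∀ i, Matrix (Fin (n i)) (Fin (n i)) K) (P Q : MvPolynomial (GIdx n) K) :
    B (rtr n K (fun i => (h i).transpose) P) Q = B P (rtr n K h Q) := by
  induction P using MvPolynomial.induction_on generalizing Q with
  | C a =>
    have : rtr n K (fun i => (h i).transpose) (C a) = C a := by simp [rtr]
    rw [this, B_C_left, B_C_left, constantCoeff_rtr]
  | add P P' hP hP' => rw [map_add, B_add_left, B_add_left, hP, hP']
  | mul_X P p hP =>
    rw [map_mul, mul_comm, mul_comm P, B_X_mul, pderiv_rtr, rtr_X, Finset.sum_mul, B_sum_left,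
      B_sum_right]
    refine Finset.sum_congr rfl fun u _ => ?_
    rw [B_C_mul_right, mul_assoc, B_C_mul_left, B_X_mul, hP, Matrix.transpose_apply]

theorem rtr_DD (h : ∀ i, Matrix (Fin (n i)) (Fin (n i)) K) :
    rtr n K h (DD n K) = C (∏ i, (h i).det) * DD n K := by
  simp only [DD, map_prod, ← Finset.prod_mul_distrib]
  refine Finset.prod_congr rfl fun i _ => ?_
  rw [AlgHom.map_det]
  have : (rtr n K h).mapMatrix (gen n K i) = gen n K i * (h i).map C := by
    ext1 r s
    simp only [AlgHom.mapMatrix_apply, Matrix.map_apply, gen, Matrix.of_apply, rtr_X,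
      Matrix.mul_apply]
    refine Finset.sum_congr rfl fun u _ => mul_comm _ _
  rw [this, Matrix.det_mul, mul_comm]
  congr 1
  exact ((C : K →+* MvPolynomial (GIdx n) K).map_det (h i)).symm

theorem eval_rtr (h g : ∀ i, Matrix (Fin (n i)) (Fin (n i)) K) (P : MvPolynomial (GIdx n) K) :
    eval (fun p : GIdx n => g p.1 p.2.1 p.2.2) (rtr n K h P) =
      eval (fun p : GIdx n => (g p.1 * h p.1) p.2.1 p.2.2) P := by
  induction P using MvPolynomial.induction_on with
  | C a => simp [rtr]
  | add P Q hP hQ => simp only [map_add, hP, hQ]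
  | mul_X P q hP =>
    rw [map_mul, map_mul, map_mul, hP, rtr_X]
    simp only [map_sum, map_mul, eval_C, eval_X, Matrix.mul_apply]
    congr 1
    refine Finset.sum_congr rfl fun u _ => mul_comm _ _

theorem eval_DD (g : ∀ i, Matrix (Fin (n i)) (Fin (n i)) K) :
    eval (fun p : GIdx n => g p.1 p.2.1 p.2.2) (DD n K) = ∏ i, (g i).det := by
  simp only [DD, map_prod]
  refine Finset.prod_congr rfl fun i _ => ?_
  rw [RingHom.map_det]
  congr 1
  ext r s
  simp [gen]

theorem map_DD : map (Int.castRingHom K) (DD n ℤ) = DD n K := by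
  simp only [DD, map_prod]
  refine Finset.prod_congr rfl fun i _ => ?_
  rw [RingHom.map_det]
  congr 1
  ext1 r s
  simp [gen]

theorem DD_ne_zero [CharZero K] : DD n K ≠ 0 := by
  intro h
  have := eval_DD (K := K) n (fun i => 1)
  rw [h] at this
  simp at this

theorem B_DD_ne_zero [CharZero K] (k : ℕ) : B (DD n K ^ k) (DD n K ^ k) ≠ 0 := by
  have h : DD n K ^ k = map (Int.castRingHom K) (DD n ℤ ^ k) := by rw [map_pow, map_DD]
  rw [h]
  apply B_self_ne_zero
  intro h0
  rw [h0, map_zero] at h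
  exact pow_ne_zero k (DD_ne_zero n) h

/-- polynomials agreeing on invertible elements agree -/
theorem eq_of_eval_units [CharZero K] (P P' : MvPolynomial (GIdx n) K)
    (hP : ∀ g : ∀ i, Matrix.GeneralLinearGroup (Fin (n i)) K,
      eval (fun p : GIdx n => (g p.1).1 p.2.1 p.2.2) P =
      eval (fun p : GIdx n => (g p.1).1 p.2.1 p.2.2) P') : P = P' := by
  have : DD n K * P = DD n K * P' := by
    apply MvPolynomial.funext
    intro g0
    rw [map_mul, map_mul]
    let g : ∀ i, Matrix (Fin (n i)) (Fin (n i)) K := fun i => Matrix.of fun r s => g0 ⟨i, r, s⟩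
    have hg : g0 = fun p : GIdx n => g p.1 p.2.1 p.2.2 := rfl
    rw [hg, eval_DD]
    by_cases h : ∏ i, (g i).det = 0
    · rw [h, zero_mul, zero_mul]
    · congr 1
      have h' : ∀ i, (g i).det ≠ 0 := fun i => Finset.prod_ne_zero_iff.mp h i (Finset.mem_univ _)
      exact hP fun i => Matrix.GeneralLinearGroup.mkOfDetNeZero (g i) (h' i)
  exact mul_left_cancel₀ (DD_ne_zero n) this

end group

section action
variable {ι : Type} [Fintype ι] [DecidableEq ι] (n : ι → ℕ) (K : Type) [Field K]
variable {A : Type} (h t : A → ι)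

/-- representation space -/
abbrev RX : Type := ∀ a : A, Matrix (Fin (n (h a))) (Fin (n (t a))) K

/-- coordinates -/
abbrev CI : Type := Σ a : A, Fin (n (h a)) × Fin (n (t a))

variable {n K h t}
/-- coordinates of a point -/
def co (x : RX n K h t) : CI n h t → K := fun c => x c.1 c.2.1 c.2.2

/-- the action -/
def act (g : ∀ i, Matrix.GeneralLinearGroup (Fin (n i)) K) (x : RX n K h t) : RX n K h t :=
  fun a => (g (h a)).1 * x a * ((g (t a))⁻¹).1

theorem act_act (g g' : ∀ i, Matrix.GeneralLinearGroup (Fin (n i)) K) (x : RX n K h t) :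
    act g (act g' x) = act (fun i => g i * g' i) x := by
  funext a
  simp only [act, mul_inv_rev, Units.val_mul]
  simp only [Matrix.mul_assoc]

/-- clearing denominators -/
theorem exists_clear (F : MvPolynomial (CI n h t) K) :
    ∃ (k : ℕ) (P : MvPolynomial (GIdx n) (MvPolynomial (CI n h t) K)),
      ∀ (x : RX n K h t) (g : ∀ i, Matrix.GeneralLinearGroup (Fin (n i)) K),
        eval (fun p : GIdx n => (g p.1).1 p.2.1 p.2.2) (map (eval (co x)) P) =
          (∏ i, (g i).1.det) ^ k * eval (co (act g x)) F := by
  have hDD : ∀ (x : RX n K h t) (g : ∀ i, Matrix.GeneralLinearGroup (Fin (n i)) K),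
      eval (fun p : GIdx n => (g p.1).1 p.2.1 p.2.2)
        (map (eval (co x)) (map C (DD n K))) = ∏ i, (g i).1.det := by
    intro x g
    rw [map_map]
    have : (eval (co x)).comp C = RingHom.id K := by ext; simp
    rw [this, map_id]
    exact eval_DD n (fun i => (g i).1)
  induction F using MvPolynomial.induction_on with
  | C a =>
    refine ⟨0, C (C a), fun x g => ?_⟩
    simp
  | add F F' hF hF' =>
    obtain ⟨k, P, hP⟩ := hF
    obtain ⟨k', P', hP'⟩ := hF'
    refine ⟨k + k', map C (DD n K) ^ k' * P + map C (DD n K) ^ k * P', fun x g => ?_⟩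
    simp only [map_add, map_mul, map_pow, hP, hP', hDD]
    ring
  | mul_X F c hF =>
    obtain ⟨k, P, hP⟩ := hF
    obtain ⟨a, r, s⟩ := c
    refine ⟨k + 1, P * ((∏ i ∈ Finset.univ.erase (t a), (gen n _ i).det) *
      (gen n (MvPolynomial (CI n h t) K) (h a) *
        (Matrix.of fun u v => C (X (⟨a, u, v⟩ : CI n h t)) :
          Matrix (Fin (n (h a))) (Fin (n (t a))) (MvPolynomial (GIdx n)
          (MvPolynomial (CI n h t) K))) *
        (gen n (MvPolynomial (CI n h t) K) (t a)).adjugate) r s), fun x g => ?_⟩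
    rw [map_mul, map_mul, hP, pow_succ, map_mul (eval (co (act g x))), eval_X]
    rw [mul_assoc ((∏ i, (g i).1.det) ^ k) (∏ i, (g i).1.det), mul_left_comm (∏ i, (g i).1.det),
      ← mul_assoc ((∏ i, (g i).1.det) ^ k)]
    congr 1
    rw [map_mul, map_mul, ← Finset.mul_prod_erase _ _ (Finset.mem_univ (t a)),
      mul_comm (Matrix.det _), mul_assoc]
    have hgen : ∀ i, ((eval (fun p : GIdx n => (g p.1).1 p.2.1 p.2.2)).comp
        (map (eval (co x)))).mapMatrix (gen n _ i) = (g i).1 := by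
      intro i
      ext1 u v
      simp [gen]
    congr 1
    · simp only [map_prod]
      refine Finset.prod_congr rfl fun i _ => ?_
      rw [← RingHom.comp_apply, RingHom.map_det, hgen]
    · rw [← RingHom.comp_apply]
      have hx : ((eval (fun p : GIdx n => (g p.1).1 p.2.1 p.2.2)).comp
        (map (eval (co x)))).mapMatrix (gen n _ (t a)).adjugate = (g (t a)).1.adjugate := by
        rw [RingHom.map_adjugate, hgen]
      have e1 : ∀ {p q : ℕ} (M : Matrix (Fin p) (Fin q) (MvPolynomial (GIdx n)
          (MvPolynomial (CI n h t) K))) (r : Fin p) (s : Fin q) (f : (MvPolynomial (GIdx n)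
          (MvPolynomial (CI n h t) K)) →+* K), f (M r s) = (M.map f) r s := fun _ _ _ _ => rfl
      rw [e1, Matrix.map_mul, Matrix.map_mul]
      rw [RingHom.mapMatrix_apply] at hx
      have hg := hgen (h a)
      rw [RingHom.mapMatrix_apply] at hg
      rw [hx, hg]
      have hM : (Matrix.of fun u v => (C (X (⟨a, u, v⟩ : CI n h t)) : MvPolynomial (GIdx n)
          (MvPolynomial (CI n h t) K))).map ((eval (fun p : GIdx n => (g p.1).1 p.2.1 p.2.2)).comp
        (map (eval (co x)))) = x a := by
        ext1 u v
        simp [co]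
      rw [hM]
      have hadj : (g (t a)).1.adjugate = (g (t a)).1.det • ((g (t a))⁻¹).1 := by
        have h1 : ((g (t a))⁻¹).1 * (g (t a)).1 = 1 := by
          rw [← Units.val_mul, inv_mul_cancel, Units.val_one]
        calc (g (t a)).1.adjugate = (((g (t a))⁻¹).1 * (g (t a)).1) * (g (t a)).1.adjugate := by
              rw [h1, one_mul]
          _ = _ := by rw [mul_assoc, Matrix.mul_adjugate, Matrix.mul_smul, mul_one]
      rw [hadj, Matrix.mul_smul]
      rfl

/-- Linear reductivity: invariant functions on a stable subset lift. -/
theorem exists_lift [CharZero K] (V : Set (RX n K h t)) (F : MvPolynomial (CI n h t) K)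
    (hF : ∀ x ∈ V, ∀ g : ∀ i, Matrix.GeneralLinearGroup (Fin (n i)) K,
      eval (co (act g x)) F = eval (co x) F) :
    ∃ H : MvPolynomial (CI n h t) K,
      (∀ (x : RX n K h t) (g : ∀ i, Matrix.GeneralLinearGroup (Fin (n i)) K),
        eval (co (act g x)) H = eval (co x) H) ∧
      ∀ x ∈ V, eval (co x) H = eval (co x) F := by
  obtain ⟨k, P, hP⟩ := exists_clear F
  set c := B (DD n K ^ k) (DD n K ^ k) with hc
  have hc0 : c ≠ 0 := B_DD_ne_zero n k
  let H : MvPolynomial (CI n h t) K :=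
    C c⁻¹ * ∑ m ∈ (DD n K ^ k).support, C (coeff m (DD n K ^ k)) * coeff m P * C (mfact m : K)
  have hH : ∀ x, eval (co x) H = c⁻¹ * B (DD n K ^ k) (map (eval (co x)) P) := by
    intro x
    simp only [H, map_mul, map_sum, eval_C, B, coeff_map]
  refine ⟨H, ?_, ?_⟩
  · intro x g
    rw [hH, hH]
    congr 1
    have hd : (∏ i, (g i).1.det) ≠ 0 := by
      rw [Finset.prod_ne_zero_iff]
      intro i _
      exact ((Matrix.isUnit_iff_isUnit_det _).mp (g i).isUnit).ne_zero
    have key : C ((∏ i, (g i).1.det) ^ k) * map (eval (co (act g x))) P =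
        rtr n K (fun i => (g i).1) (map (eval (co x)) P) := by
      apply eq_of_eval_units
      intro g'
      rw [map_mul, eval_C, hP, act_act, eval_rtr n (fun i => (g i).1) (fun i => (g' i).1)]
      have := hP x (fun i => g' i * g i)
      simp only [Units.val_mul] at this
      rw [this]
      simp only [Matrix.det_mul, Finset.prod_mul_distrib]
      ring
    have k2 := congrArg (B (DD n K ^ k)) key
    rw [B_C_mul_right, ← B_rtr, map_pow, rtr_DD, mul_pow, ← map_pow, B_C_mul_left] at k2
    simp only [Matrix.det_transpose] at k2
    exact mul_left_cancel₀ (pow_ne_zero k hd) k2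
  · intro x hx
    rw [hH]
    have key : map (eval (co x)) P = C (eval (co x) F) * DD n K ^ k := by
      apply eq_of_eval_units
      intro g
      rw [hP, hF x hx g, map_mul, eval_C, map_pow, eval_DD n (fun i => (g i).1)]
      ring
    rw [key, B_C_mul_right, ← hc]
    field_simp

end action

end Reyn

namespace Degen

/-- Splitting of a finite decreasing filtration. -/
theorem exists_split {K V : Type} [Field K] [AddCommGroup V] [Module K V]
    (U : ℕ → Submodule K V) (hU : Antitone U) (N : ℕ) (h0 : U 0 = ⊤) (hN : U N = ⊥) :
    ∃ e : ℕ → Module.End K V,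
      (∀ k j, e k * e j = if k = j then e k else 0) ∧
      (∑ k ∈ Finset.range N, e k = 1) ∧
      (∀ k v, e k v ∈ U k) ∧ (∀ k, ∀ v ∈ U (k + 1), e k v = 0) ∧
      (∀ k, U (k + 1) = U k → e k = 0) := by
  have hproj : ∀ m, ∃ f : Module.End K V, (∀ v, f v ∈ U m) ∧ ∀ v ∈ U m, f v = v := by
    intro m
    obtain ⟨f, hf⟩ := (U m).subtype.exists_leftInverse_of_injective
      (LinearMap.ker_eq_bot.mpr (Submodule.subtype_injective _))
    refine ⟨(U m).subtype ∘ₗ f, fun v => (f v).2, fun v hv => ?_⟩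
    have := LinearMap.congr_fun hf ⟨v, hv⟩
    simp only [LinearMap.comp_apply, Submodule.subtype_apply, LinearMap.id_apply] at this ⊢
    rw [this]
  choose ρ hρ1 hρ2 using hproj
  let q : ℕ → Module.End K V := fun m => Nat.rec 1 (fun m p => ρ (m + 1) * p) m
  have q0 : q 0 = 1 := rfl
  have qs : ∀ m, q (m + 1) = ρ (m + 1) * q m := fun m => rfl
  have q1 : ∀ m v, q m v ∈ U m := by
    intro m v
    cases m with
    | zero => rw [h0]; trivial
    | succ m => rw [qs]; exact hρ1 _ _
  have q2 : ∀ m, ∀ v ∈ U m, q m v = v := by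
    intro m
    induction m with
    | zero => intro v _; rw [q0]; rfl
    | succ m ih =>
      intro v hv
      rw [qs, Module.End.mul_apply, ih v (hU (Nat.le_succ m) hv), hρ2 _ _ hv]
  have q3 : ∀ m m', m ≤ m' → q m * q m' = q m' := by
    intro m m' h
    ext v
    exact q2 m _ (hU h (q1 m' v))
  have q4 : ∀ m m', m ≤ m' → q m' * q m = q m' := by
    intro m m' h
    induction m', h using Nat.le_induction with
    | base => exact q3 m m le_rfl
    | succ m' h ih => rw [qs, mul_assoc, ih]
  refine ⟨fun m => q m - q (m + 1), ?_, ?_, ?_, ?_, ?_⟩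
  · intro k j
    simp only [sub_mul, mul_sub]
    rcases lt_trichotomy k j with h | h | h
    · rw [if_neg h.ne, q3 k j h.le, q3 k (j + 1) (by omega), q3 (k + 1) j h,
        q3 (k + 1) (j + 1) (by omega)]
      abel
    · subst h
      rw [if_pos rfl, q3 k k le_rfl, q3 k (k + 1) (by omega), q4 k (k + 1) (by omega),
        q3 (k + 1) (k + 1) le_rfl]
      abel
    · rw [if_neg h.ne', q4 j k h.le, q4 j (k + 1) (by omega), q4 (j + 1) k h,
        q4 (j + 1) (k + 1) (by omega)]
      abel
  · rw [Finset.sum_range_sub', q0]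
    have : q N = 0 := by
      ext v
      have := q1 N v
      rw [hN, Submodule.mem_bot] at this
      simpa using this
    rw [this, sub_zero]
  · intro k v
    exact Submodule.sub_mem _ (q1 k v) (hU (Nat.le_succ k) (q1 (k + 1) v))
  · intro k v hv
    simp only [LinearMap.sub_apply]
    rw [q2 _ v (hU (Nat.le_succ k) hv), q2 _ v hv, sub_self]
  · intro k h
    ext v
    simp only [LinearMap.sub_apply, LinearMap.zero_apply]
    rw [qs, Module.End.mul_apply, hρ2 _ _ (by rw [h]; exact q1 k v), sub_self]

end Degen

namespace FinQuiver

variable {Q : FinQuiver} {K : Type} [Field K]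

theorem moment_glAct (α : Q.I → ℕ) (g : Q.Gl K α) (x : Q.Rep K α) (i : Q.I) :
    Q.moment K α (Q.glAct K α g x) i = (g i).1 * Q.moment K α x i * ((g i)⁻¹).1 := by
  have hinv : ∀ j, ((g j)⁻¹).1 * (g j).1 = 1 := fun j => by
    rw [← Units.val_mul, inv_mul_cancel, Units.val_one]
  have key : ∀ {m p : ℕ} (A : Matrix (Fin m) (Fin m) K) (X : Matrix (Fin m) (Fin p) K)
      (B' B : Matrix (Fin p) (Fin p) K) (Y : Matrix (Fin p) (Fin m) K)
      (A' : Matrix (Fin m) (Fin m) K), B' * B = 1 →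
      (A * X * B') * (B * Y * A') = A * (X * Y) * A' := by
    intro m p A X B' B Y A' h
    calc (A * X * B') * (B * Y * A') = A * X * (B' * B) * Y * A' := by
          simp only [Matrix.mul_assoc]
      _ = _ := by rw [h, Matrix.mul_one]; simp only [Matrix.mul_assoc]
  simp only [moment, Matrix.mul_sub, Matrix.sub_mul, Matrix.mul_sum, Matrix.sum_mul]
  congr 1
  · refine Finset.sum_congr rfl fun a _ => ?_
    by_cases h : Q.h a = i
    · subst h
      simp only [dif_pos]
      exact key _ (x (Sum.inl a)) _ _ (x (Sum.inr a)) _ (hinv (Q.t a))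
    · simp only [dif_neg h, Matrix.mul_zero, Matrix.zero_mul]
  · refine Finset.sum_congr rfl fun a _ => ?_
    by_cases h : Q.t a = i
    · subst h
      simp only [dif_pos]
      exact key _ (x (Sum.inr a)) _ _ (x (Sum.inl a)) _ (hinv (Q.h a))
    · simp only [dif_neg h, Matrix.mul_zero, Matrix.zero_mul]

theorem glAct_mem (l : Q.I → K) (α : Q.I → ℕ) (g : Q.Gl K α) (x : Q.Rep K α)
    (hx : x ∈ Q.MomentFiber K l α) : Q.glAct K α g x ∈ Q.MomentFiber K l α := by
  intro i
  rw [moment_glAct, hx i, Matrix.mul_smul, Matrix.mul_one, Matrix.smul_mul, ← Units.val_mul,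
    mul_inv_cancel, Units.val_one]

/-- coordinates of a point -/
def cds (α : Q.I → ℕ) (x : Q.Rep K α) : Q.Coords α → K := fun c => x c.1 c.2.1 c.2.2

/-- entries of the moment map are polynomial -/
theorem moment_poly (α : Q.I → ℕ) (i : Q.I) (r s : Fin (α i)) :
    ∃ P : MvPolynomial (Q.Coords α) K, ∀ x : Q.Rep K α,
      MvPolynomial.eval (cds α x) P = Q.moment K α x i r s := by
  refine ⟨(∑ a : Q.A, if h : Q.h a = i then
      ∑ u : Fin (α (Q.t a)), MvPolynomial.X ⟨Sum.inl a, Fin.cast (congrArg α h).symm r, u⟩ *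
        MvPolynomial.X ⟨Sum.inr a, u, Fin.cast (congrArg α h).symm s⟩ else 0) -
    ∑ a : Q.A, if h : Q.t a = i then
      ∑ u : Fin (α (Q.h a)), MvPolynomial.X ⟨Sum.inr a, Fin.cast (congrArg α h).symm r, u⟩ *
        MvPolynomial.X ⟨Sum.inl a, u, Fin.cast (congrArg α h).symm s⟩ else 0, fun x => ?_⟩
  simp only [moment, map_sub, map_sum, Matrix.sub_apply, Matrix.sum_apply]
  congr 1
  · refine Finset.sum_congr rfl fun a _ => ?_
    split_ifs with h
    · simp only [map_sum, map_mul, Matrix.submatrix_apply, Matrix.mul_apply]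
      refine Finset.sum_congr rfl fun u _ => ?_
      exact congrArg₂ (· * ·) (MvPolynomial.eval_X _) (MvPolynomial.eval_X _)
    · simp
  · refine Finset.sum_congr rfl fun a _ => ?_
    split_ifs with h
    · simp only [map_sum, map_mul, Matrix.submatrix_apply, Matrix.mul_apply]
      refine Finset.sum_congr rfl fun u _ => ?_
      exact congrArg₂ (· * ·) (MvPolynomial.eval_X _) (MvPolynomial.eval_X _)
    · simp

/-- the degenerating family -/
def fam (α : Q.I → ℕ) (x : Q.Rep K α) (e : ℕ → ∀ i, Matrix (Fin (α i)) (Fin (α i)) K) (N : ℕ)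
    (t : K) : Q.Rep K α :=
  fun a => ∑ k ∈ Finset.range N, ∑ j ∈ Finset.range N,
    t ^ (k - j) • (e k (Q.dh a) * x a * e j (Q.dt a))

theorem fam_poly [CharZero K] (α : Q.I → ℕ) (x : Q.Rep K α)
    (e : ℕ → ∀ i, Matrix (Fin (α i)) (Fin (α i)) K) (N : ℕ)
    (P : MvPolynomial (Q.Coords α) K) (c : K)
    (hP : ∀ t : K, t ≠ 0 → MvPolynomial.eval (cds α (fam α x e N t)) P = c) :
    MvPolynomial.eval (cds α (fam α x e N 0)) P = c := by
  let Z : Q.Coords α → Polynomial K := fun c' =>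
    ∑ k ∈ Finset.range N, ∑ j ∈ Finset.range N, Polynomial.X ^ (k - j) *
      Polynomial.C ((e k (Q.dh c'.1) * x c'.1 * e j (Q.dt c'.1)) c'.2.1 c'.2.2)
  have hZ : ∀ t : K, Polynomial.eval t (MvPolynomial.aeval Z P) =
      MvPolynomial.eval (cds α (fam α x e N t)) P := by
    intro t
    have h1 : cds α (fam α x e N t) = fun c' => Polynomial.eval t (Z c') := by
      funext c'
      simp only [cds, fam, Z, Polynomial.eval_finsetSum, Matrix.sum_apply, Matrix.smul_apply,
        Polynomial.eval_mul, Polynomial.eval_pow, Polynomial.eval_X, Polynomial.eval_C,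
        smul_eq_mul]
    rw [h1]
    have := MvPolynomial.eval₂_comp_left (Polynomial.evalRingHom t) (algebraMap K (Polynomial K))
      Z P
    rw [← MvPolynomial.aeval_def] at this
    rw [← Polynomial.coe_evalRingHom, this, MvPolynomial.eval, MvPolynomial.coe_eval₂Hom]
    congr 1
    ext a
    simp
  have h2 : MvPolynomial.aeval Z P = Polynomial.C c := by
    apply Polynomial.eq_of_infinite_eval_eq
    refine Set.Infinite.mono (s := {0}ᶜ) ?_ (Set.finite_singleton (0 : K)).infinite_compl
    intro t ht
    simp only [Set.mem_ofPred_eq, Polynomial.eval_C, hZ]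
    exact hP t ht
  rw [← hZ, h2, Polynomial.eval_C]

theorem fam_eq_act (α : Q.I → ℕ) (x : Q.Rep K α)
    (e : ℕ → ∀ i, Matrix (Fin (α i)) (Fin (α i)) K) (N : ℕ)
    (he : ∀ i k j, e k i * e j i = if k = j then e k i else 0)
    (hs : ∀ i, ∑ k ∈ Finset.range N, e k i = 1)
    (hx : ∀ (a : Q.DA) (k j : ℕ), k < j → e k (Q.dh a) * x a * e j (Q.dt a) = 0)
    (t : K) (ht : t ≠ 0) : ∃ g : Q.Gl K α, fam α x e N t = Q.glAct K α g x := by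
  have hm : ∀ (i : Q.I) (s s' : K), s * s' = 1 → (∑ k ∈ Finset.range N, s ^ k • e k i) *
      (∑ k ∈ Finset.range N, s' ^ k • e k i) = 1 := by
    intro i s s' h
    rw [Finset.sum_mul, ← hs i]
    refine Finset.sum_congr rfl fun k hk => ?_
    rw [Finset.mul_sum, Finset.sum_eq_single k]
    · rw [Matrix.smul_mul, Matrix.mul_smul, he, if_pos rfl, smul_smul, ← mul_pow, h, one_pow,
        one_smul]
    · intro j _ hj
      rw [Matrix.smul_mul, Matrix.mul_smul, he, if_neg hj.symm, smul_zero, smul_zero]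
    · intro h; exact absurd hk h
  let g : Q.Gl K α := fun i => ⟨∑ k ∈ Finset.range N, t ^ k • e k i,
    ∑ k ∈ Finset.range N, t⁻¹ ^ k • e k i, hm i t t⁻¹ (mul_inv_cancel₀ ht),
    hm i t⁻¹ t (inv_mul_cancel₀ ht)⟩
  refine ⟨g, ?_⟩
  funext a
  have : Q.glAct K α g x a = (∑ k ∈ Finset.range N, t ^ k • e k (Q.dh a)) * x a *
    (∑ k ∈ Finset.range N, t⁻¹ ^ k • e k (Q.dt a)) := rfl
  rw [this, fam]
  simp only [Matrix.sum_mul, Matrix.mul_sum]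
  rw [Finset.sum_comm]
  refine Finset.sum_congr rfl fun j _ => Finset.sum_congr rfl fun k _ => ?_
  rw [Matrix.smul_mul, Matrix.smul_mul, Matrix.mul_smul, smul_smul]
  rcases lt_or_ge k j with h | h
  · rw [hx a k j h, smul_zero, smul_zero]
  · congr 1
    rw [pow_sub₀ t ht h, inv_pow]

theorem fam_zero (α : Q.I → ℕ) (x : Q.Rep K α)
    (e : ℕ → ∀ i, Matrix (Fin (α i)) (Fin (α i)) K) (N : ℕ)
    (hx : ∀ (a : Q.DA) (k j : ℕ), k < j → e k (Q.dh a) * x a * e j (Q.dt a) = 0) (a : Q.DA)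
    (h0 : ∀ k < N, e k (Q.dh a) = 0 ∨ e k (Q.dt a) = 0) : fam α x e N 0 a = 0 := by
  rw [fam]
  refine Finset.sum_eq_zero fun k hk => Finset.sum_eq_zero fun j _ => ?_
  rcases lt_trichotomy k j with h | h | h
  · rw [hx a k j h, smul_zero]
  · subst h
    rcases h0 k (Finset.mem_range.mp hk) with h | h <;> simp [h]
  · rw [zero_pow (by omega), zero_smul]

/-- composition series -/
theorem exists_series (α : Q.I → ℕ) (x : Q.Rep K α) :
    ∃ (U : ℕ → ∀ i : Q.I, Submodule K (Fin (α i) → K)) (N : ℕ),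
      U 0 = ⊤ ∧ U N = ⊥ ∧ Antitone U ∧ (∀ k, Q.SubRep K α x (U k)) ∧
      ∀ k < N, Q.SimpleSubquot K α x (U (k + 1)) (U k) := by
  let S := {U : ∀ i : Q.I, Submodule K (Fin (α i) → K) // Q.SubRep K α x U}
  have hbot : Q.SubRep K α x ⊥ := by
    intro a v hv
    have : v = 0 := hv
    rw [this, Matrix.mulVec_zero]
    exact Submodule.zero_mem _
  have htop : Q.SubRep K α x ⊤ := fun a v hv => Submodule.mem_top
  have : Nonempty S := ⟨⟨⊥, hbot⟩⟩
  let d : (∀ i : Q.I, Submodule K (Fin (α i) → K)) → ℕ := fun U => ∑ i, Module.finrank K (U i)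
  have hd : ∀ U W : ∀ i : Q.I, Submodule K (Fin (α i) → K), U < W → d U < d W := by
    intro U W h
    obtain ⟨hle, i, hi⟩ := Pi.lt_def.mp h
    exact Finset.sum_lt_sum (fun i _ => Submodule.finrank_mono (hle i))
      ⟨i, Finset.mem_univ _, Submodule.finrank_lt_finrank_of_lt hi⟩
  have : WellFoundedLT S := ⟨Subrelation.wf (r := InvImage (· < ·) fun U : S => d U.1)
    (fun {U W} h => hd U.1 W.1 h) (InvImage.wf _ wellFounded_lt)⟩
  have hb : ∀ U, d U ≤ d ⊤ := by
    intro U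
    exact Finset.sum_le_sum (fun i _ => Submodule.finrank_mono le_top)
  have : WellFoundedGT S := ⟨Subrelation.wf (r := InvImage (· < ·) fun U : S => d ⊤ - d U.1)
    (fun {U W} h => by
      have h1 := hd W.1 U.1 h
      have h2 := hb U.1
      have h3 := hb W.1
      show d ⊤ - d U.1 < d ⊤ - d W.1
      omega) (InvImage.wf _ wellFounded_lt)⟩
  obtain ⟨b, hb0, N, hbN, hcov⟩ := exists_covBy_seq_of_wellFoundedLT_wellFoundedGT S
  refine ⟨fun m => (b (N - m)).1, N, ?_, ?_, ?_, fun k => (b (N - k)).2, ?_⟩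
  · have : (⟨⊤, htop⟩ : S) ≤ b N := hbN (show (b N).1 ≤ ⊤ from le_top)
    exact le_antisymm le_top this
  · have : b 0 ≤ (⟨⊥, hbot⟩ : S) := hb0 (show ⊥ ≤ (b 0).1 from bot_le)
    simp only [Nat.sub_self]
    exact le_antisymm this bot_le
  · apply antitone_nat_of_succ_le
    intro m
    by_cases h : m < N
    · have h2 := (hcov (N - (m + 1)) (by omega)).le
      have h3 : N - (m + 1) + 1 = N - m := by omega
      rw [h3] at h2
      exact h2
    · have h1 : N - (m + 1) = N - m := by omega
      simp only [h1]; exact le_rfl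
  · intro k hk
    have hc := hcov (N - (k + 1)) (by omega)
    have h3 : N - (k + 1) + 1 = N - k := by omega
    rw [h3] at hc
    refine ⟨(b _).2, (b _).2, fun i => hc.le i, fun h => hc.lt.ne (Subtype.ext h), ?_⟩
    intro V hV h1 h2
    by_contra hne
    push Not at hne
    refine hc.2 (c := ⟨V, hV⟩) (lt_of_le_of_ne h1 ?_) (lt_of_le_of_ne h2 ?_)
    · intro h; exact hne.1 (congrArg Subtype.val h).symm
    · intro h; exact hne.2 (congrArg Subtype.val h)

theorem exists_degen [CharZero K] (l : Q.I → K) (J Kv : Set Q.I)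
    (hdisj : ∀ i, ¬ (i ∈ J ∧ i ∈ Kv)) (α : Q.I → ℕ)
    (hcf : ∀ x ∈ Q.MomentFiber K l α,
      ∀ U W : ∀ i : Q.I, Submodule K (Fin (α i) → K),
        Q.SimpleSubquot K α x U W →
        (∀ i, Module.finrank K ↥(W i) ≠ Module.finrank K ↥(U i) → i ∈ J) ∨
        (∀ i, Module.finrank K ↥(W i) ≠ Module.finrank K ↥(U i) → i ∈ Kv))
    (x : Q.Rep K α) (hx : x ∈ Q.MomentFiber K l α) :
    ∃ x0 ∈ Q.MomentFiber K l α,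
      (∀ a : Q.DA, (Q.dh a ∈ J ∧ Q.dt a ∈ Kv) ∨ (Q.dh a ∈ Kv ∧ Q.dt a ∈ J) → x0 a = 0) ∧
      ∀ P : MvPolynomial (Q.Coords α) K, (∀ g : Q.Gl K α,
        MvPolynomial.eval (cds α (Q.glAct K α g x)) P = MvPolynomial.eval (cds α x) P) →
        MvPolynomial.eval (cds α x0) P = MvPolynomial.eval (cds α x) P := by
  obtain ⟨U, N, hU0, hUN, hUa, hUs, hUq⟩ := exists_series α x
  have hsp := fun i => Degen.exists_split (fun k => U k i) (fun _ _ h => hUa h i) N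
    (congrFun hU0 i) (congrFun hUN i)
  choose E hE1 hE2 hE3 hE4 hE5 using hsp
  let e : ℕ → ∀ i, Matrix (Fin (α i)) (Fin (α i)) K := fun k i => LinearMap.toMatrix' (E i k)
  have he : ∀ i k j, e k i * e j i = if k = j then e k i else 0 := by
    intro i k j
    simp only [e]
    rw [← LinearMap.toMatrix'_mul, hE1]
    split_ifs <;> simp
  have hs : ∀ i, ∑ k ∈ Finset.range N, e k i = 1 := by
    intro i
    simp only [e]
    rw [← map_sum, hE2, LinearMap.toMatrix'_one]
  have hx' : ∀ (a : Q.DA) (k j : ℕ), k < j → e k (Q.dh a) * x a * e j (Q.dt a) = 0 := by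
    intro a k j hkj
    apply Matrix.toLin'.injective
    ext1 v
    apply LinearMap.ext
    intro w
    simp only [e, Matrix.toLin'_mul, LinearMap.comp_apply, Matrix.toLin'_toMatrix', map_zero,
      LinearMap.zero_apply, Matrix.toLin'_apply]
    exact hE4 _ _ _ (hUa (Nat.succ_le_of_lt hkj) _ (hUs j a _ (hE3 _ _ _)))
  have hmem : ∀ t : K, t ≠ 0 → fam α x e N t ∈ Q.MomentFiber K l α := by
    intro t ht
    obtain ⟨g, hg⟩ := fam_eq_act α x e N he hs hx' t ht
    rw [hg]
    exact glAct_mem l α g x hx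
  refine ⟨fam α x e N 0, ?_, ?_, ?_⟩
  · intro i
    ext r s
    obtain ⟨P, hP⟩ := moment_poly (K := K) α i r s
    rw [← hP]
    apply fam_poly
    intro t ht
    rw [hP, hmem t ht i]
  · intro a ha
    apply fam_zero α x e N hx'
    intro k hk
    have hz : ∀ i, Module.finrank K ↥(U k i) = Module.finrank K ↥(U (k + 1) i) → e k i = 0 := by
      intro i h
      have h1 : U (k + 1) i = U k i :=
        Submodule.eq_of_le_of_finrank_eq (hUa (Nat.le_succ k) i) h.symm
      simp only [e, hE5 i k h1, map_zero]
    by_contra hne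
    push Not at hne
    have n1 := fun h => hne.1 (hz _ h)
    have n2 := fun h => hne.2 (hz _ h)
    rcases hcf x hx _ _ (hUq k hk) with h | h
    · have a1 := h _ n1
      have a2 := h _ n2
      rcases ha with ha | ha
      · exact hdisj _ ⟨a2, ha.2⟩
      · exact hdisj _ ⟨a1, ha.1⟩
    · have a1 := h _ n1
      have a2 := h _ n2
      rcases ha with ha | ha
      · exact hdisj _ ⟨ha.1, a1⟩
      · exact hdisj _ ⟨ha.2, a2⟩
  · intro P hP
    apply fam_poly
    intro t ht
    obtain ⟨g, hg⟩ := fam_eq_act α x e N he hs hx' t ht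
    rw [hg, hP]

end FinQuiver

namespace FinQuiver

section blocks
variable {K : Type} [Field K]

/-- block diagonal matrix -/
def bd {m m' n n' : ℕ} (M : Matrix (Fin m) (Fin m') K) (N : Matrix (Fin n) (Fin n') K) :
    Matrix (Fin (m + n)) (Fin (m' + n')) K :=
  (Matrix.fromBlocks M 0 0 N).submatrix finSumFinEquiv.symm finSumFinEquiv.symm

theorem bd_mul {m m' m'' n n' n'' : ℕ} (M : Matrix (Fin m) (Fin m') K)
    (N : Matrix (Fin n) (Fin n') K) (M' : Matrix (Fin m') (Fin m'') K)
    (N' : Matrix (Fin n') (Fin n'') K) : bd M N * bd M' N' = bd (M * M') (N * N') := by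
  rw [bd, bd, Matrix.submatrix_mul_equiv, Matrix.fromBlocks_multiply, bd]
  simp

theorem bd_add {m m' n n' : ℕ} (M M' : Matrix (Fin m) (Fin m') K)
    (N N' : Matrix (Fin n) (Fin n') K) : bd (M + M') (N + N') = bd M N + bd M' N' := by
  ext r s
  refine Fin.addCases (fun r => ?_) (fun r => ?_) r <;>
    refine Fin.addCases (fun s => ?_) (fun s => ?_) s <;> simp [bd]

theorem bd_zero {m m' n n' : ℕ} :
    bd (0 : Matrix (Fin m) (Fin m') K) (0 : Matrix (Fin n) (Fin n') K) = 0 := by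
  rw [bd, Matrix.fromBlocks_zero]
  rfl

theorem bd_sub {m m' n n' : ℕ} (M M' : Matrix (Fin m) (Fin m') K)
    (N N' : Matrix (Fin n) (Fin n') K) : bd (M - M') (N - N') = bd M N - bd M' N' := by
  rw [eq_sub_iff_add_eq, ← bd_add, sub_add_cancel, sub_add_cancel]

theorem bd_sum {τ : Type} {m m' n n' : ℕ} (s : Finset τ) (M : τ → Matrix (Fin m) (Fin m') K)
    (N : τ → Matrix (Fin n) (Fin n') K) :
    bd (∑ a ∈ s, M a) (∑ a ∈ s, N a) = ∑ a ∈ s, bd (M a) (N a) := by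
  classical
  induction s using Finset.induction_on with
  | empty => simp [bd_zero]
  | insert a s ha ih => rw [Finset.sum_insert ha, Finset.sum_insert ha, Finset.sum_insert ha,
      bd_add, ih]

theorem bd_one {m n : ℕ} : bd (1 : Matrix (Fin m) (Fin m) K) (1 : Matrix (Fin n) (Fin n) K) = 1 := by
  rw [bd, Matrix.fromBlocks_one, Matrix.submatrix_one_equiv]

theorem bd_smul {m n m' n' : ℕ} (c : K) (M : Matrix (Fin m) (Fin m') K)
    (N : Matrix (Fin n) (Fin n') K) : bd (c • M) (c • N) = c • bd M N := by
  ext r s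
  refine Fin.addCases (fun r => ?_) (fun r => ?_) r <;>
    refine Fin.addCases (fun s => ?_) (fun s => ?_) s <;> simp [bd]

/-- left upper block -/
def pl {m m' n n' : ℕ} (M : Matrix (Fin (m + n)) (Fin (m' + n')) K) : Matrix (Fin m) (Fin m') K :=
  M.submatrix (Fin.castAdd n) (Fin.castAdd n')

/-- right lower block -/
def pr {m m' n n' : ℕ} (M : Matrix (Fin (m + n)) (Fin (m' + n')) K) : Matrix (Fin n) (Fin n') K :=
  M.submatrix (Fin.natAdd m) (Fin.natAdd m')

theorem pl_bd {m m' n n' : ℕ} (M : Matrix (Fin m) (Fin m') K) (N : Matrix (Fin n) (Fin n') K) :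
    pl (bd M N) = M := by
  ext r s
  simp [pl, bd]

theorem pr_bd {m m' n n' : ℕ} (M : Matrix (Fin m) (Fin m') K) (N : Matrix (Fin n) (Fin n') K) :
    pr (bd M N) = N := by
  ext r s
  simp [pr, bd]

theorem bd_pl_pr {m m' n n' : ℕ} (M : Matrix (Fin (m + n)) (Fin (m' + n')) K)
    (h1 : m ≠ 0 → n' ≠ 0 → M = 0) (h2 : n ≠ 0 → m' ≠ 0 → M = 0) : bd (pl M) (pr M) = M := by
  ext r s
  refine Fin.addCases (fun r => ?_) (fun r => ?_) r <;>
    refine Fin.addCases (fun s => ?_) (fun s => ?_) s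
  · simp [bd, pl]
  · rw [h1 (by have := r.2; omega) (by have := s.2; omega)]
    simp [bd]
  · rw [h2 (by have := r.2; omega) (by have := s.2; omega)]
    simp [bd]
  · simp [bd, pr]

theorem pl_mul_left {m m' n n' : ℕ} (M : Matrix (Fin (m + n)) (Fin (m + n)) K)
    (N : Matrix (Fin (m + n)) (Fin (m' + n')) K) (h : m = 0 ∨ n = 0) :
    pl (M * N) = pl M * pl N := by
  ext r s
  rcases h with h | h
  · have := r.2; omega
  · subst h
    simp [pl, Matrix.mul_apply, Fin.sum_univ_add]

theorem pl_mul_right {m m' n n' : ℕ} (M : Matrix (Fin (m + n)) (Fin (m' + n')) K)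
    (N : Matrix (Fin (m' + n')) (Fin (m' + n')) K) (h : m' = 0 ∨ n' = 0) :
    pl (M * N) = pl M * pl N := by
  ext r s
  rcases h with h | h
  · have := s.2; omega
  · subst h
    simp [pl, Matrix.mul_apply, Fin.sum_univ_add]

theorem pr_mul_left {m m' n n' : ℕ} (M : Matrix (Fin (m + n)) (Fin (m + n)) K)
    (N : Matrix (Fin (m + n)) (Fin (m' + n')) K) (h : m = 0 ∨ n = 0) :
    pr (M * N) = pr M * pr N := by
  ext r s
  rcases h with h | h
  · subst h
    simp [pr, Matrix.mul_apply, Fin.sum_univ_add]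
  · have := r.2; omega

theorem pr_mul_right {m m' n n' : ℕ} (M : Matrix (Fin (m + n)) (Fin (m' + n')) K)
    (N : Matrix (Fin (m' + n')) (Fin (m' + n')) K) (h : m' = 0 ∨ n' = 0) :
    pr (M * N) = pr M * pr N := by
  ext r s
  rcases h with h | h
  · subst h
    simp [pr, Matrix.mul_apply, Fin.sum_univ_add]
  · have := s.2; omega

theorem pl_one {m n : ℕ} : pl (1 : Matrix (Fin (m + n)) (Fin (m + n)) K) = 1 := by
  rw [← bd_one, pl_bd]

theorem pr_one {m n : ℕ} : pr (1 : Matrix (Fin (m + n)) (Fin (m + n)) K) = 1 := by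
  rw [← bd_one, pr_bd]

end blocks

section sums
variable {Q : FinQuiver} {K : Type} [Field K] {β γ : Q.I → ℕ}

/-- direct sum of representations -/
def ds (y : Q.Rep K β) (z : Q.Rep K γ) : Q.Rep K (β + γ) :=
  fun a => bd (y a) (z a)

/-- first component -/
def p1 (x : Q.Rep K (β + γ)) : Q.Rep K β := fun a => pl (n := γ _) (n' := γ _) (x a)

/-- second component -/
def p2 (x : Q.Rep K (β + γ)) : Q.Rep K γ := fun a => pr (m := β _) (m' := β _) (x a)

theorem p1_ds (y : Q.Rep K β) (z : Q.Rep K γ) : p1 (ds y z) = y := by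
  funext a; exact pl_bd _ _

theorem p2_ds (y : Q.Rep K β) (z : Q.Rep K γ) : p2 (ds y z) = z := by
  funext a; exact pr_bd _ _

theorem moment_ds (y : Q.Rep K β) (z : Q.Rep K γ) (i : Q.I) :
    Q.moment K (β + γ) (ds y z) i = bd (Q.moment K β y i) (Q.moment K γ z i) := by
  rw [moment, moment, moment, bd_sub, bd_sum, bd_sum]
  congr 1
  · refine Finset.sum_congr rfl fun a _ => ?_
    by_cases h : Q.h a = i
    · subst h
      simp only [dif_pos]
      exact bd_mul (y (Sum.inl a)) (z (Sum.inl a)) (y (Sum.inr a)) (z (Sum.inr a))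
    · simp only [dif_neg h]
      exact bd_zero.symm
  · refine Finset.sum_congr rfl fun a _ => ?_
    by_cases h : Q.t a = i
    · subst h
      simp only [dif_pos]
      exact bd_mul (y (Sum.inr a)) (z (Sum.inr a)) (y (Sum.inl a)) (z (Sum.inl a))
    · simp only [dif_neg h]
      exact bd_zero.symm

theorem ds_mem_iff (l : Q.I → K) (y : Q.Rep K β) (z : Q.Rep K γ) :
    ds y z ∈ Q.MomentFiber K l (β + γ) ↔
      y ∈ Q.MomentFiber K l β ∧ z ∈ Q.MomentFiber K l γ := by
  have h1 : ∀ i, (l i • (1 : Matrix (Fin ((β + γ) i)) (Fin ((β + γ) i)) K)) =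
      bd (l i • (1 : Matrix (Fin (β i)) (Fin (β i)) K))
        (l i • (1 : Matrix (Fin (γ i)) (Fin (γ i)) K)) := by
    intro i
    rw [bd_smul, bd_one]
  constructor
  · intro h
    refine ⟨fun i => ?_, fun i => ?_⟩
    · have := h i
      rw [moment_ds, h1] at this
      have := congrArg pl this
      rwa [pl_bd, pl_bd] at this
    · have := h i
      rw [moment_ds, h1] at this
      have := congrArg pr this
      rwa [pr_bd, pr_bd] at this
  · rintro ⟨hy, hz⟩ i
    rw [moment_ds, h1, hy i, hz i]

/-- direct sum of group elements -/
def gds (g : Q.Gl K β) (g' : Q.Gl K γ) : Q.Gl K (β + γ) := fun i =>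
  ⟨bd (g i).1 (g' i).1, bd ((g i)⁻¹).1 ((g' i)⁻¹).1,
    by
      refine (bd_mul _ _ _ _).trans ?_
      rw [← Units.val_mul, ← Units.val_mul, mul_inv_cancel, mul_inv_cancel]
      exact bd_one,
    by
      refine (bd_mul _ _ _ _).trans ?_
      rw [← Units.val_mul, ← Units.val_mul, inv_mul_cancel, inv_mul_cancel]
      exact bd_one⟩

theorem ds_act (g : Q.Gl K β) (g' : Q.Gl K γ) (y : Q.Rep K β) (z : Q.Rep K γ) :
    ds (Q.glAct K β g y) (Q.glAct K γ g' z) = Q.glAct K (β + γ) (gds g g') (ds y z) := by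
  funext a
  have : Q.glAct K (β + γ) (gds g g') (ds y z) a =
    bd (g (Q.dh a)).1 (g' (Q.dh a)).1 * bd (y a) (z a) *
      bd ((g (Q.dt a))⁻¹).1 ((g' (Q.dt a))⁻¹).1 := rfl
  rw [this, bd_mul, bd_mul]
  rfl

/-- first block of a group element -/
def g1 (hd : ∀ i, β i = 0 ∨ γ i = 0) (g : Q.Gl K (β + γ)) : Q.Gl K β := fun i =>
  ⟨pl (m := β i) (n := γ i) (m' := β i) (n' := γ i) (g i).1,
    pl (m := β i) (n := γ i) (m' := β i) (n' := γ i) ((g i)⁻¹).1,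
    by
      rw [← pl_mul_left _ _ (hd i)]
      refine (congrArg pl (Units.mul_inv (g i))).trans pl_one,
    by
      rw [← pl_mul_left _ _ (hd i)]
      refine (congrArg pl (Units.inv_mul (g i))).trans pl_one⟩

/-- second block of a group element -/
def g2 (hd : ∀ i, β i = 0 ∨ γ i = 0) (g : Q.Gl K (β + γ)) : Q.Gl K γ := fun i =>
  ⟨pr (m := β i) (n := γ i) (m' := β i) (n' := γ i) (g i).1,
    pr (m := β i) (n := γ i) (m' := β i) (n' := γ i) ((g i)⁻¹).1,
    by
      rw [← pr_mul_left _ _ (hd i)]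
      refine (congrArg pr (Units.mul_inv (g i))).trans pr_one,
    by
      rw [← pr_mul_left _ _ (hd i)]
      refine (congrArg pr (Units.inv_mul (g i))).trans pr_one⟩

theorem p1_act (hd : ∀ i, β i = 0 ∨ γ i = 0) (g : Q.Gl K (β + γ)) (x : Q.Rep K (β + γ)) :
    p1 (Q.glAct K (β + γ) g x) = Q.glAct K β (g1 hd g) (p1 x) := by
  funext a
  have e1 := pl_mul_right (m := β (Q.dh a)) (n := γ (Q.dh a)) (m' := β (Q.dt a))
    (n' := γ (Q.dt a)) ((g (Q.dh a)).1 * x a) ((g (Q.dt a))⁻¹).1 (hd _)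
  have e2 := pl_mul_left (m := β (Q.dh a)) (n := γ (Q.dh a)) (m' := β (Q.dt a))
    (n' := γ (Q.dt a)) ((g (Q.dh a)).1) (x a) (hd _)
  exact e1.trans (congrArg (· * _) e2)

theorem p2_act (hd : ∀ i, β i = 0 ∨ γ i = 0) (g : Q.Gl K (β + γ)) (x : Q.Rep K (β + γ)) :
    p2 (Q.glAct K (β + γ) g x) = Q.glAct K γ (g2 hd g) (p2 x) := by
  funext a
  have e1 := pr_mul_right (m := β (Q.dh a)) (n := γ (Q.dh a)) (m' := β (Q.dt a))
    (n' := γ (Q.dt a)) ((g (Q.dh a)).1 * x a) ((g (Q.dt a))⁻¹).1 (hd _)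
  have e2 := pr_mul_left (m := β (Q.dh a)) (n := γ (Q.dh a)) (m' := β (Q.dt a))
    (n' := γ (Q.dt a)) ((g (Q.dh a)).1) (x a) (hd _)
  exact e1.trans (congrArg (· * _) e2)

theorem ds_p1_p2 (x : Q.Rep K (β + γ))
    (h1 : ∀ a, β (Q.dh a) ≠ 0 → γ (Q.dt a) ≠ 0 → x a = 0)
    (h2 : ∀ a, γ (Q.dh a) ≠ 0 → β (Q.dt a) ≠ 0 → x a = 0) : ds (p1 x) (p2 x) = x := by
  funext a
  exact bd_pl_pr (x a) (h1 a) (h2 a)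

/-- membership of evaluated polynomials in a subalgebra -/
theorem aeval_mem' {σ S : Type} [CommRing S] [Algebra K S] (T : Subalgebra K S) (f : σ → S)
    (hf : ∀ i, f i ∈ T) (P : MvPolynomial σ K) : MvPolynomial.aeval f P ∈ T := by
  induction P using MvPolynomial.induction_on with
  | C a => rw [MvPolynomial.aeval_C]; exact T.algebraMap_mem a
  | add p q hp hq => rw [map_add]; exact T.add_mem hp hq
  | mul_X p i hp => rw [map_mul, MvPolynomial.aeval_X]; exact T.mul_mem hp (hf i)

theorem aeval_fun {σ V : Type} (f : σ → V → K) (P : MvPolynomial σ K) (v : V) :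
    (MvPolynomial.aeval f P : V → K) v = MvPolynomial.eval (fun c => f c v) P := by
  induction P using MvPolynomial.induction_on with
  | C a => rw [MvPolynomial.aeval_C, MvPolynomial.eval_C]; rfl
  | add p q hp hq => rw [map_add, map_add, Pi.add_apply, hp, hq]
  | mul_X p i hp => rw [map_mul, map_mul, Pi.mul_apply, hp, MvPolynomial.aeval_X,
      MvPolynomial.eval_X]

end sums

section final
variable {Q : FinQuiver} {K : Type} [Field K] {β γ : Q.I → ℕ}

/-- the index of the first factor -/
abbrev s0 : SymIdx 2 (fun _ => 1) := ⟨0, 0⟩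
/-- the index of the second factor -/
abbrev s1 : SymIdx 2 (fun _ => 1) := ⟨1, 0⟩

theorem sidx (p : SymIdx 2 (fun _ => 1)) : p = s0 ∨ p = s1 := by
  obtain ⟨t, u⟩ := p
  have : u = 0 := Subsingleton.elim _ _
  subst this
  fin_cases t
  · left; rfl
  · right; rfl

/-- pair of representations as a point of the product -/
def mkP (y : Q.Rep K β) (z : Q.Rep K γ) : Q.SymRep K 2 (fun _ => 1) ![β, γ] :=
  fun p => match p with
  | ⟨0, _⟩ => y
  | ⟨1, _⟩ => z

/-- first component -/
def fst' (v : Q.SymRep K 2 (fun _ => 1) ![β, γ]) : Q.Rep K β := v s0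
/-- second component -/
def snd' (v : Q.SymRep K 2 (fun _ => 1) ![β, γ]) : Q.Rep K γ := v s1

theorem mkP_eta (v : Q.SymRep K 2 (fun _ => 1) ![β, γ]) : mkP (fst' v) (snd' v) = v := by
  funext p
  rcases sidx p with rfl | rfl <;> rfl

theorem mkP_mem (l : Q.I → K) (y : Q.Rep K β) (z : Q.Rep K γ) (hy : y ∈ Q.MomentFiber K l β)
    (hz : z ∈ Q.MomentFiber K l γ) : mkP y z ∈ Q.SymFiber K 2 (fun _ => 1) ![β, γ] l := by
  intro p
  rcases sidx p with rfl | rfl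
  · exact hy
  · exact hz

/-- direct sum map on the fibres -/
def dsF (l : Q.I → K) (v : ↥(Q.SymFiber K 2 (fun _ => 1) ![β, γ] l)) :
    ↥(Q.MomentFiber K l (β + γ)) :=
  ⟨ds (fst' v.1) (snd' v.1), (ds_mem_iff l _ _).mpr ⟨v.2 s0, v.2 s1⟩⟩

theorem dsF_mem (l : Q.I → K) (f : ↥(Q.MomentFiber K l (β + γ)) → K)
    (hf : f ∈ Q.InvRing K l (β + γ)) :
    (fun v => f (dsF l v)) ∈ Q.SymInvRing K 2 (fun _ => 1) ![β, γ] l := by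
  obtain ⟨⟨P, hP⟩, hinv⟩ := hf
  refine ⟨⟨?_, ?_⟩, ?_⟩
  · have : (fun v => f (dsF l v)) = MvPolynomial.aeval (fun (c : Q.Coords (β + γ))
        (v : ↥(Q.SymFiber K 2 (fun _ => 1) ![β, γ] l)) => (dsF l v).1 c.1 c.2.1 c.2.2) P := by
      funext v
      rw [aeval_fun, ← hP]
      exact aeval_fun _ P (dsF l v)
    rw [this]
    apply aeval_mem'
    rintro ⟨a, r, s⟩
    have key : ∀ (r : Fin (β (Q.dh a) + γ (Q.dh a))) (s : Fin (β (Q.dt a) + γ (Q.dt a))),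
        (fun (v : ↥(Q.SymFiber K 2 (fun _ => 1) ![β, γ] l)) => bd (fst' v.1 a) (snd' v.1 a) r s) ∈
          Q.symFnRing K 2 (fun _ => 1) ![β, γ] l := by
      intro r s
      refine Fin.addCases (fun r => ?_) (fun r => ?_) r <;>
        refine Fin.addCases (fun s => ?_) (fun s => ?_) s
      · refine ⟨MvPolynomial.X ⟨s0, ⟨a, r, s⟩⟩, ?_⟩
        refine (MvPolynomial.aeval_X _ _).trans ?_
        funext v
        simp [bd]
        rfl
      · convert Subalgebra.zero_mem _ using 1
        funext v
        simp [bd]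
      · convert Subalgebra.zero_mem _ using 1
        funext v
        simp [bd]
      · refine ⟨MvPolynomial.X ⟨s1, ⟨a, r, s⟩⟩, ?_⟩
        refine (MvPolynomial.aeval_X _ _).trans ?_
        funext v
        simp [bd]
        rfl
    exact key r s
  · rintro v w ⟨g, hg⟩
    apply hinv
    refine ⟨gds (g s0) (g s1), ?_⟩
    have h0 : fst' w.1 = Q.glAct K β (g s0) (fst' v.1) := congrFun hg s0
    have h1 : snd' w.1 = Q.glAct K γ (g s1) (snd' v.1) := congrFun hg s1
    show ds (fst' w.1) (snd' w.1) = _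
    rw [h0, h1]
    exact ds_act _ _ _ _
  · rintro v w ⟨π, hπ⟩
    have : v = w := by
      apply Subtype.ext
      rw [hπ]
      funext p
      obtain ⟨t, u⟩ := p
      have : π t u = u := Subsingleton.elim _ _
      show v.1 ⟨t, u⟩ = v.1 ⟨t, π t u⟩
      rw [this]
    rw [this]

/-- the restriction homomorphism -/
def resHom (l : Q.I → K) :
    Q.InvRing K l (β + γ) →ₐ[K] Q.SymInvRing K 2 (fun _ => 1) ![β, γ] l where
  toFun f := ⟨fun v => f.1 (dsF l v), dsF_mem l f.1 f.2⟩
  map_one' := rfl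
  map_mul' _ _ := rfl
  map_zero' := rfl
  map_add' _ _ := rfl
  commutes' _ := rfl

theorem resHom_surj [CharZero K] (l : Q.I → K) (hd : ∀ i, β i = 0 ∨ γ i = 0) :
    Function.Surjective (resHom (Q := Q) (K := K) (β := β) (γ := γ) l) := by
  rintro ⟨f, ⟨⟨F, hF⟩, hinv⟩, -⟩
  let n : SymIdx 2 (fun _ => 1) × Q.I → ℕ := fun p => ![β, γ] p.1.1 p.2
  let h : SymIdx 2 (fun _ => 1) × Q.DA → SymIdx 2 (fun _ => 1) × Q.I := fun p => (p.1, Q.dh p.2)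
  let t : SymIdx 2 (fun _ => 1) × Q.DA → SymIdx 2 (fun _ => 1) × Q.I := fun p => (p.1, Q.dt p.2)
  let T : Type := Σ p : SymIdx 2 (fun _ => 1), Q.Coords (![β, γ] p.1)
  let ren : T → Reyn.CI n h t := fun c => ⟨(c.1, c.2.1), c.2.2⟩
  let ren' : Reyn.CI n h t → T := fun c => ⟨c.1.1, ⟨c.1.2, c.2⟩⟩
  let un : Q.SymRep K 2 (fun _ => 1) ![β, γ] → Reyn.RX n K h t := fun v p => v p.1 p.2
  let cu : Reyn.RX n K h t → Q.SymRep K 2 (fun _ => 1) ![β, γ] := fun v p a => v (p, a)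
  let cc : Q.SymRep K 2 (fun _ => 1) ![β, γ] → T → K := fun v c => v c.1 c.2.1 c.2.2.1 c.2.2.2
  have hfF : ∀ v, f v = MvPolynomial.eval (cc v.1) F := by
    intro v
    rw [← hF]
    exact aeval_fun _ F v
  have hren : ∀ x : Reyn.RX n K h t, MvPolynomial.eval (Reyn.co x) (MvPolynomial.rename ren F) =
      MvPolynomial.eval (cc (cu x)) F := by
    intro x
    rw [MvPolynomial.eval_rename]
    rfl
  obtain ⟨H, hH1, hH2⟩ := Reyn.exists_lift (n := n) (K := K) (h := h) (t := t)
    {x | cu x ∈ Q.SymFiber K 2 (fun _ => 1) ![β, γ] l} (MvPolynomial.rename ren F) (by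
      intro x hx g
      rw [hren, hren]
      let g' : ∀ p : SymIdx 2 (fun _ => 1), Q.Gl K (![β, γ] p.1) := fun p i => g (p, i)
      have hm : cu (Reyn.act g x) ∈ Q.SymFiber K 2 (fun _ => 1) ![β, γ] l :=
        fun p => glAct_mem l _ (g' p) _ (hx p)
      have := hinv ⟨cu x, hx⟩ ⟨cu (Reyn.act g x), hm⟩ ⟨g', rfl⟩
      rw [hfF, hfF] at this
      exact this.symm)
  let q : Q.Rep K (β + γ) → Reyn.RX n K h t := fun x => un (mkP (p1 x) (p2 x))
  let f' : ↥(Q.MomentFiber K l (β + γ)) → K := fun x => MvPolynomial.eval (Reyn.co (q x.1)) H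
  have hf' : f' ∈ Q.InvRing K l (β + γ) := by
    refine ⟨?_, ?_⟩
    · have : f' = MvPolynomial.aeval (fun (c : Reyn.CI n h t)
        (x : ↥(Q.MomentFiber K l (β + γ))) => Reyn.co (q x.1) c) H := by
        funext x
        rw [aeval_fun]
      rw [this]
      apply aeval_mem'
      rintro ⟨⟨p, a⟩, r, s⟩
      rcases sidx p with rfl | rfl
      · exact ⟨MvPolynomial.X ⟨a, Fin.castAdd (γ (Q.dh a)) r, Fin.castAdd (γ (Q.dt a)) s⟩,
          MvPolynomial.aeval_X _ _⟩
      · exact ⟨MvPolynomial.X ⟨a, Fin.natAdd (β (Q.dh a)) r, Fin.natAdd (β (Q.dt a)) s⟩,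
          MvPolynomial.aeval_X _ _⟩
    · rintro x y ⟨g, hg⟩
      let gg : ∀ p : SymIdx 2 (fun _ => 1), Q.Gl K (![β, γ] p.1) := fun p => match p with
        | ⟨0, _⟩ => g1 hd g
        | ⟨1, _⟩ => g2 hd g
      have : q y.1 = Reyn.act (fun p : SymIdx 2 (fun _ => 1) × Q.I => gg p.1 p.2) (q x.1) := by
        rw [hg]
        funext pa
        obtain ⟨p, a⟩ := pa
        rcases sidx p with rfl | rfl
        · exact congrFun (p1_act hd g x.1) a
        · exact congrFun (p2_act hd g x.1) a
      show MvPolynomial.eval (Reyn.co (q x.1)) H = MvPolynomial.eval (Reyn.co (q y.1)) H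
      rw [this]
      exact (hH1 _ _).symm
  refine ⟨⟨f', hf'⟩, ?_⟩
  apply Subtype.ext
  funext v
  show MvPolynomial.eval (Reyn.co (q (ds (fst' v.1) (snd' v.1)))) H = f v
  have hq : q (ds (fst' v.1) (snd' v.1)) = un v.1 := by
    simp only [q]
    rw [p1_ds, p2_ds, mkP_eta]
  rw [hq, hH2 (un v.1) v.2, hren, hfF]

theorem resHom_inj [CharZero K] (l : Q.I → K) (J Kv : Set Q.I)
    (hdisj : ∀ i, ¬ (i ∈ J ∧ i ∈ Kv))
    (hsJ : ∀ i, β i ≠ 0 → i ∈ J) (hsK : ∀ i, γ i ≠ 0 → i ∈ Kv)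
    (hcf : ∀ x ∈ Q.MomentFiber K l (β + γ),
      ∀ U W : ∀ i : Q.I, Submodule K (Fin ((β + γ) i) → K),
        Q.SimpleSubquot K (β + γ) x U W →
        (∀ i, Module.finrank K ↥(W i) ≠ Module.finrank K ↥(U i) → i ∈ J) ∨
        (∀ i, Module.finrank K ↥(W i) ≠ Module.finrank K ↥(U i) → i ∈ Kv)) :
    Function.Injective (resHom (Q := Q) (K := K) (β := β) (γ := γ) l) := by
  rw [injective_iff_map_eq_zero]
  rintro ⟨f, ⟨F, hF⟩, hinv⟩ h0
  apply Subtype.ext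
  funext x
  have hfF : ∀ v : ↥(Q.MomentFiber K l (β + γ)), f v = MvPolynomial.eval (cds _ v.1) F := by
    intro v
    rw [← hF]
    exact aeval_fun _ F v
  obtain ⟨x0, hx0, hsplit, hP⟩ := exists_degen l J Kv hdisj (β + γ) hcf x.1 x.2
  have hx := hP F (by
    intro g
    have := hinv x ⟨_, glAct_mem l _ g x.1 x.2⟩ ⟨g, rfl⟩
    rw [hfF, hfF] at this
    exact this.symm)
  have hds : ds (p1 x0) (p2 x0) = x0 := by
    apply ds_p1_p2
    · intro a ha hb
      exact hsplit a (Or.inl ⟨hsJ _ ha, hsK _ hb⟩)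
    · intro a ha hb
      exact hsplit a (Or.inr ⟨hsK _ ha, hsJ _ hb⟩)
  have hm := (ds_mem_iff l (p1 x0) (p2 x0)).mp (by rw [hds]; exact hx0)
  have h1 := congrFun (congrArg Subtype.val h0) ⟨mkP (p1 x0) (p2 x0), mkP_mem l _ _ hm.1 hm.2⟩
  have h2 : f ⟨x0, hx0⟩ = 0 := by
    have h3 : dsF l ⟨mkP (p1 x0) (p2 x0), mkP_mem l _ _ hm.1 hm.2⟩ = ⟨x0, hx0⟩ :=
      Subtype.ext hds
    rw [← h3]
    exact h1
  show f x = 0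
  rw [hfF, ← hx, ← h2, hfF]

end final

end FinQuiver

/-- if the vertex set of `Q` is a disjoint union `𝒥 ∪ 𝒦`,
`α = α_𝒥 + α_𝒦` with supports in `𝒥`, `𝒦`, and the dimension vector of every
composition factor (simple subquotient) of every `Π^λ`-module of dimension `α`
has support in `𝒥` or in `𝒦`, then `N(λ,α) ≅ N(λ,α_𝒥) × N(λ,α_𝒦)` as varieties. -/
theorem stmt18 (Q : FinQuiver) (K : Type) [Field K] [CharZero K] [IsAlgClosed K]
    (l : Q.I → K) (J Kv : Set Q.I)
    (hdisj : ∀ i, ¬ (i ∈ J ∧ i ∈ Kv)) (hcover : ∀ i, i ∈ J ∨ i ∈ Kv)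
    (α αJ αK : Q.I → ℕ)
    (hsum : α = αJ + αK)
    (hsJ : ∀ i, αJ i ≠ 0 → i ∈ J) (hsK : ∀ i, αK i ≠ 0 → i ∈ Kv)
    (hcf : ∀ x ∈ Q.MomentFiber K l α,
      ∀ U W : ∀ i : Q.I, Submodule K (Fin (α i) → K),
        Q.SimpleSubquot K α x U W →
        (∀ i, Module.finrank K ↥(W i) ≠ Module.finrank K ↥(U i) → i ∈ J) ∨
        (∀ i, Module.finrank K ↥(W i) ≠ Module.finrank K ↥(U i) → i ∈ Kv)) :
    Nonempty (Q.InvRing K l α ≃ₐ[K]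
      Q.SymInvRing K 2 (fun _ => 1) ![αJ, αK] l) := by
  subst hsum
  have hd : ∀ i, αJ i = 0 ∨ αK i = 0 := by
    intro i
    by_contra h
    push Not at h
    exact hdisj i ⟨hsJ i h.1, hsK i h.2⟩
  exact ⟨AlgEquiv.ofBijective (FinQuiver.resHom l)
    ⟨FinQuiver.resHom_inj l J Kv hdisj hsJ hsK hcf, FinQuiver.resHom_surj l hd⟩⟩

end
end

section
/- Suppose the vertex set I of Q is a disjoint union 𝒥 ∪ 𝒦 and there is a unique arrow of Q with one end in 𝒥 and the other in 𝒦, connecting vertices j ∈ 𝒥 and k ∈ 𝒦. Let Q̃ be the quiver with vertex set 𝒦 ∪ {j} consisting of this arrow together with all arrows of Q with head and tail in 𝒦, and let μ ∈ K^{𝒦∪{j}} agree with λ on 𝒦 and have μ_j = 0. Let α ∈ ℕ^I with α_j = 1 and λ·α_𝒥 = λ·α_𝒦 = 0, where α = α_𝒥 + α_𝒦 is the decomposition of α into parts supported in 𝒥 and 𝒦. Then α ∈ ℕR_λ^+ (for Q) if and only if α_𝒥 ∈ ℕR_λ^+ (for Q) and ε_j + α_𝒦 ∈ ℕR_μ^+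 (for Q̃). -/
open scoped BigOperators

noncomputable section

namespace RC

/-- `(β, ε_i)` in terms of the Cartan matrix `C`. -/
def B {I : Type} [Fintype I] (C : I → I → ℤ) (β : I → ℤ) (i : I) : ℤ := ∑ x, β x * C x i

/-- Reachability inside the support. -/
def Reach {I : Type} (C : I → I → ℤ) (β : I → ℤ) : I → I → Prop :=
  Relation.ReflTransGen (fun x y => β x ≠ 0 ∧ β y ≠ 0 ∧ C x y < 0)

def Conn {I : Type} (C : I → I → ℤ) (β : I → ℤ) : Prop :=
  ∀ i j, β i ≠ 0 → β j ≠ 0 → Reach C β i j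

structure Ok {I : Type} (C : I → I → ℤ) : Prop where
  symm : ∀ x y, C x y = C y x
  off : ∀ x y, x ≠ y → C x y ≤ 0
  diag : ∀ x, C x x = 2 ∨ C x x ≤ 0

/-- Positive roots, generated by raising steps. -/
inductive U {I : Type} [Fintype I] [DecidableEq I] (C : I → I → ℤ) : (I → ℤ) → Prop
  | simple (i : I) (hi : C i i = 2) : U C (Pi.single i 1)
  | fund (β : I → ℤ) (h0 : β ≠ 0) (hp : ∀ i, 0 ≤ β i) (hc : Conn C β)
      (hB : ∀ i, B C β i ≤ 0) : U C β
  | raise (i : I) (β : I → ℤ) (hi : C i i = 2) (hU : U C β) (hB : B C β i < 0) :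
      U C (β + Pi.single i (-B C β i))

/-- Positive roots with coordinate one at `j`. -/
inductive G {I : Type} [Fintype I] [DecidableEq I] (C : I → I → ℤ) (j : I) :
    (I → ℤ) → Prop
  | base (β : I → ℤ) (hp : ∀ i, 0 ≤ β i) (hj : β j = 1) (hc : Conn C β)
      (hB : ∀ i, i ≠ j → B C β i ≤ 0) : G C j β
  | raise (i : I) (β : I → ℤ) (hij : i ≠ j) (hi : C i i = 2) (hG : G C j β)
      (hB : B C β i < 0) : G C j (β + Pi.single i (-B C β i))

section one

variable {I : Type} [Fintype I] [DecidableEq I] {C : I → I → ℤ}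

lemma B_add (C : I → I → ℤ) (β : I → ℤ) (i : I) (c : ℤ) (y : I) :
    B C (β + Pi.single i c) y = B C β y + c * C i y := by
  simp [B, add_mul, Finset.sum_add_distrib, Pi.single_apply, ite_mul]

lemma B_single (C : I → I → ℤ) (i : I) (c : ℤ) (y : I) :
    B C (Pi.single i c) y = c * C i y := by
  simp [B, Pi.single_apply, ite_mul]

lemma B_nonpos (hC : Ok C) {β : I → ℤ} (hp : ∀ i, 0 ≤ β i) {i : I} (hi : β i = 0) :
    B C β i ≤ 0 := by
  apply Finset.sum_nonpos
  intro x _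
  by_cases h : x = i
  · subst h; simp [hi]
  · exact mul_nonpos_of_nonneg_of_nonpos (hp x) (hC.off x i h)

lemma B_nonpos' (hC : Ok C) {β : I → ℤ} (hp : ∀ i, 0 ≤ β i) {i : I} (hi : C i i ≤ 0) :
    B C β i ≤ 0 := by
  apply Finset.sum_nonpos
  intro x _
  by_cases h : x = i
  · subst h; exact mul_nonpos_of_nonneg_of_nonpos (hp x) hi
  · exact mul_nonpos_of_nonneg_of_nonpos (hp x) (hC.off x i h)

lemma B_le (hC : Ok C) {β : I → ℤ} (hp : ∀ i, 0 ≤ β i) {i j : I} (hij : i ≠ j) :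
    B C β i ≤ β i * C i i + β j * C j i := by
  have : B C β i ≤ ∑ x, ((if x = i then β i * C i i else 0) +
      (if x = j then β j * C j i else 0)) := by
    apply Finset.sum_le_sum
    intro x _
    by_cases h : x = i
    · subst h; simp [hij]
    · by_cases h' : x = j
      · subst h'; simp [h]
      · simp only [h, h', if_false]
        simpa using mul_nonpos_of_nonneg_of_nonpos (hp x) (hC.off x i h)
  simpa [Finset.sum_add_distrib] using this

lemma Reach_symm (hC : Ok C) {β : I → ℤ} {x y : I} (h : Reach C β x y) : Reach C β y x := by
  induction h with
  | refl => exact Relation.ReflTransGen.refl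
  | tail _ hab ih =>
    obtain ⟨h1, h2, h3⟩ := hab
    exact Relation.ReflTransGen.head ⟨h2, h1, by rw [hC.symm]; exact h3⟩ ih

lemma Conn_of (hC : Ok C) {β : I → ℤ} (x : I) (h : ∀ i, β i ≠ 0 → Reach C β x i) :
    Conn C β := fun i j hi hj => (Reach_symm hC (h i hi)).trans (h j hj)

lemma Reach_mono {β γ : I → ℤ} (h : ∀ i, β i ≠ 0 → γ i ≠ 0) {x y : I}
    (hr : Reach C β x y) : Reach C γ x y := by
  induction hr with
  | refl => exact Relation.ReflTransGen.refl
  | tail _ hab ih =>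
    obtain ⟨h1, h2, h3⟩ := hab
    exact ih.tail ⟨h _ h1, h _ h2, h3⟩

lemma add_single_nonneg {β : I → ℤ} (hp : ∀ i, 0 ≤ β i) (i : I) {c : ℤ} (hc : 0 ≤ c) (x : I) :
    0 ≤ (β + Pi.single i c : I → ℤ) x := by
  by_cases h : x = i
  · subst h; simpa using add_nonneg (hp x) hc
  · simpa [h] using hp x

lemma U.nonneg {β : I → ℤ} (h : U C β) : ∀ i, 0 ≤ β i := by
  induction h with
  | simple i hi => intro x; by_cases h : x = i <;> simp [Pi.single_apply, h]
  | fund β h0 hp hc hB => exact hp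
  | raise i β hi hU hB ih => exact add_single_nonneg ih i (by omega)

lemma G.nonneg {j : I} {β : I → ℤ} (h : G C j β) : ∀ i, 0 ≤ β i := by
  induction h with
  | base β hp => exact hp
  | raise i β hij hi hU hB ih => exact add_single_nonneg ih i (by omega)

lemma G.one {j : I} {β : I → ℤ} (h : G C j β) : β j = 1 := by
  induction h with
  | base β hp hj => exact hj
  | raise i β hij hi hU hB ih => simp [Pi.single_apply, hij.symm, ih]

lemma U.ne_zero {β : I → ℤ} (h : U C β) : β ≠ 0 := by
  cases h with
  | simple i hi => intro h; have := congrFun h i; simp at this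
  | fund β h0 hp hc hB => exact h0
  | raise i β hi hU hB =>
    intro h
    have := congrFun h i
    have := hU.nonneg i
    simp at *
    omega

lemma U.conn (hC : Ok C) {β : I → ℤ} (h : U C β) : Conn C β := by
  induction h with
  | simple i hi =>
    intro x y hx hy
    have h1 : x = i := by by_contra h; simp [h] at hx
    have h2 : y = i := by by_contra h; simp [h] at hy
    subst h1; subst h2; exact Relation.ReflTransGen.refl
  | fund β h0 hp hc hB => exact hc
  | raise i β hi hU hB ih =>
    have hp := hU.nonneg
    have hsub : ∀ x, β x ≠ 0 → (β + Pi.single i (-B C β i) : I → ℤ) x ≠ 0 := by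
      intro x hx
      have := hp x
      by_cases h : x = i
      · subst h; simp; omega
      · simpa [h] using hx
    have hii : (β + Pi.single i (-B C β i) : I → ℤ) i ≠ 0 := by
      have := hp i
      simp; omega
    -- some neighbour in the support
    obtain ⟨y, -, hy⟩ : ∃ y ∈ Finset.univ, β y * C y i < 0 := by
      by_contra hcon
      push Not at hcon
      have : 0 ≤ B C β i := Finset.sum_nonneg hcon
      omega
    have hy0 : β y ≠ 0 := by rintro h; simp [h] at hy
    have hCy : C y i < 0 := by
      by_contra h
      have := mul_nonneg (hp y) (not_lt.mp h)
      omega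
    apply Conn_of hC y
    intro x hx
    by_cases h : x = i
    · subst h
      exact Relation.ReflTransGen.single ⟨hsub _ hy0, hii, hCy⟩
    · exact Reach_mono hsub (ih y x hy0 (by simpa [h] using hx))

lemma U.raise' {i : I} {β γ : I → ℤ} (hi : C i i = 2) (hU : U C β) {c : ℤ}
    (hB : B C β i = -c) (hc : 0 < c) (hγ : γ = β + Pi.single i c) : U C γ := by
  have := U.raise i β hi hU (by omega)
  rw [hB, neg_neg] at this
  rwa [hγ]

lemma U.lower_aux (hC : Ok C) (n : ℕ) : ∀ (β : I → ℤ), ∑ x, β x < n → U C β →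
    ∀ i, C i i = 2 → 0 < B C β i →
    β = Pi.single i 1 ∨ U C (β + Pi.single i (-B C β i)) := by
  induction n with
  | zero =>
    intro β hn hU
    have := Finset.sum_nonneg (fun x (_ : x ∈ Finset.univ) => hU.nonneg x)
    exfalso; push_cast at hn; omega
  | succ n ih =>
    intro β hn hU i hi hd
    have hU0 := hU
    cases hU with
    | simple x hx =>
      left
      rw [B_single] at hd
      by_cases h : x = i
      · rw [h]
      · have := hC.off x i h; omega
    | fund _ h0 hp hc hB => have := hB i; omega
    | raise j γ hj hγ hB =>
      right
      have hjj : C j j = 2 := hj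
      have hp := hU0.nonneg
      set c := -B C γ j with hc
      have hcp : 0 < c := by omega
      have hd' : B C (γ + Pi.single j c) i = B C γ i + c * C j i := B_add ..
      by_cases hij : i = j
      · subst hij
        have : γ + Pi.single i c + Pi.single i (-B C (γ + Pi.single i c) i) = γ := by
          rw [hd', hi]
          ext x
          by_cases h : x = i
          · subst h; simp; omega
          · simp [h]
        rw [this]; exact hγ
      set d := B C (γ + Pi.single j c) i with hdd
      have hoff := hC.off j i (Ne.symm hij)
      have hsy := hC.symm i j
      have hBj : B C (γ + Pi.single j c) j = c := by rw [B_add, hj]; omega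
      have hγn : ∑ x, γ x < n := by
        have : ∑ x, (γ + Pi.single j c : I → ℤ) x = ∑ x, γ x + c := by
          simp [Finset.sum_add_distrib]
        rw [this] at hn
        push_cast at hn; omega
      rcases (by omega : C j i = 0 ∨ C j i = -1 ∨ C j i ≤ -2) with ha | ha | ha
      · rw [ha] at hd'
        have hγi : B C γ i = d := by omega
        rcases ih γ hγn hγ i hi (by omega) with h | h
        · rw [h, B_single, hsy, ha] at hB; omega
        · refine U.raise' hj h (c := c) ?_ hcp ?_
          · rw [B_add, hsy, ha]; omega
          · rw [hγi]; abel
      · rw [ha] at hd' hsy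
        have hγi : B C γ i = d + c := by omega
        rcases ih γ hγn hγ i hi (by omega) with h | h
        · have h1 : c = 1 := by rw [hc, h, B_single, hsy]; norm_num
          have h2 : d = 1 := by
            rw [h, B_single, hi] at hγi; omega
          rw [h, h1, h2]
          have := U.simple (C := C) j hj
          convert this using 1
          ext x; simp [Pi.single_apply]; split_ifs <;> omega
        · rw [hγi] at h
          set γ' := γ + Pi.single i (-(d + c)) with hγ'
          have hj' : B C γ' j = d := by rw [hγ', B_add, hsy]; omega
          have hi' : B C γ' i = -(d + c) := by rw [hγ', B_add, hi]; omega
          have hn' : ∑ x, γ' x < n := by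
            have : ∑ x, γ' x = ∑ x, γ x + (-(d + c)) := by
              rw [hγ']; simp [Finset.sum_add_distrib]
            omega
          rcases ih γ' hn' h j hj (by omega) with h' | h'
          · rw [h', B_single, hj] at hj'
            rw [h', B_single, ha] at hi'
            omega
          · rw [hj'] at h'
            have e1 : B C (γ' + Pi.single j (-d)) i = -c := by
              rw [B_add, ha, hi']; ring
            have e2 : B C (γ' + Pi.single j (-d)) j = -d := by
              rw [B_add, hj, hj']; ring
            have h3 := U.raise' hi h' e1 hcp rfl
            refine U.raise' hj h3 (c := d + c) ?_ (by omega) ?_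
            · rw [B_add, e2, hsy]; ring
            · rw [hγ']
              ext x; simp [Pi.single_apply]; split_ifs <;> omega
      · exfalso
        have h1 := B_le hC hp hij
        have h2 := B_le hC hp (Ne.symm hij)
        rw [← hdd, hi] at h1
        rw [hBj, hj, hsy] at h2
        have hpi := hp i
        have hpj := hp j
        set p := (γ + Pi.single j c : I → ℤ) i
        set q := (γ + Pi.single j c : I → ℤ) j
        nlinarith [mul_nonneg hpi (by omega : 0 ≤ -2 - C j i),
          mul_nonneg hpj (by omega : 0 ≤ -2 - C j i)]

lemma U.lower (hC : Ok C) {β : I → ℤ} (hU : U C β) {i : I} (hi : C i i = 2)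
    (hd : 0 < B C β i) : β = Pi.single i 1 ∨ U C (β + Pi.single i (-B C β i)) := by
  have hs := Finset.sum_nonneg (fun x (_ : x ∈ Finset.univ) => hU.nonneg x)
  exact U.lower_aux hC ((∑ x, β x).toNat + 1) β (by push_cast; omega) hU i hi hd

/-- reflections preserve roots -/
lemma U.refl (hC : Ok C) {β : I → ℤ} (hU : U C β) {i : I} (hi : C i i = 2) :
    U C (β + Pi.single i (-B C β i)) ∨ U C (-(β + Pi.single i (-B C β i))) := by
  rcases lt_trichotomy (B C β i) 0 with h | h | h
  · exact Or.inl (U.raise i β hi hU h)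
  · rw [h]; left; simpa using hU
  · rcases hU.lower hC hi h with h' | h'
    · right
      have : -(β + Pi.single i (-B C β i)) = Pi.single i 1 := by
        rw [h', B_single, hi]
        ext x; simp [Pi.single_apply]; split_ifs <;> omega
      rw [this]; exact U.simple i hi
    · exact Or.inl h'

lemma base_U_aux (hC : Ok C) (n : ℕ) : ∀ (β : I → ℤ) (j : I), ∑ x, β x < n →
    (∀ i, 0 ≤ β i) → β j = 1 → Conn C β → (∀ i, i ≠ j → B C β i ≤ 0) → U C β := by
  induction n with
  | zero =>
    intro β j hn hp
    have := Finset.sum_nonneg (fun x (_ : x ∈ Finset.univ) => hp x)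
    exfalso; push_cast at hn; omega
  | succ n ih =>
    intro β j hn hp hj hc hB
    by_cases hBj : B C β j ≤ 0
    · refine U.fund β (by rintro rfl; simp at hj) hp hc ?_
      intro i
      by_cases h : i = j
      · rw [h]; exact hBj
      · exact hB i h
    have hjj : C j j = 2 := by
      rcases hC.diag j with h | h
      · exact h
      · exact absurd (B_nonpos' hC hp h) hBj
    by_cases hs : ∀ y, y ≠ j → β y = 0
    · have : β = Pi.single j 1 := by
        ext y
        by_cases h : y = j
        · subst h; simp [hj]
        · simp [h, hs y h]
      rw [this]; exact U.simple j hjj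
    push Not at hs
    obtain ⟨y, hyj, hy⟩ := hs
    obtain ⟨x, hx, hCx⟩ : ∃ x, β x ≠ 0 ∧ C j x < 0 := by
      rcases Relation.ReflTransGen.cases_head (hc j y (by omega) hy) with h | ⟨x, ⟨_, h1, h2⟩, _⟩
      · exact absurd h.symm hyj
      · exact ⟨x, h1, h2⟩
    have hxj : x ≠ j := by rintro rfl; omega
    have hxp := hp x
    have hle := B_le hC hp hxj.symm
    rw [hj, hjj, hC.symm x j] at hle
    have hx1 : β x = 1 := by
      by_contra h
      have : 2 ≤ β x := by omega
      nlinarith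
    rw [hx1] at hle
    have hBj1 : B C β j = 1 := by omega
    have hCx1 : C j x = -1 := by omega
    have hother : ∀ z, z ≠ x → z ≠ j → β z ≠ 0 → C j z = 0 := by
      intro z hzx hzj hz
      have hp' : ∀ i, 0 ≤ (β + Pi.single x (-1) : I → ℤ) i := by
        intro i
        by_cases h : i = x
        · subst h; simp [hx1]
        · simpa [h] using hp i
      have h1 := B_le hC hp' hzj.symm
      rw [B_add, hC.symm x j, hCx1, hBj1, hjj, hC.symm z j] at h1
      simp [hxj.symm, hzx, hj] at h1
      have := hC.off j z hzj.symm
      have := hp z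
      by_contra h
      nlinarith [mul_pos (by omega : 0 < β z) (by omega : 0 < - C j z)]
    set β' := β + Pi.single j (-1) with hβ'
    have hβj : β' j = 0 := by simp [hβ', hj]
    have hβo : ∀ z, z ≠ j → β' z = β z := by intro z hz; simp [hβ', hz]
    have hp' : ∀ i, 0 ≤ β' i := by
      intro i
      by_cases h : i = j
      · subst h; omega
      · rw [hβo i h]; exact hp i
    have hBj' : B C β' j = -1 := by rw [hβ', B_add, hBj1, hjj]; norm_num
    have hU : U C β' := by
      apply ih β' x
      · have : ∑ x, β' x = ∑ x, β x + (-1) := by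
          rw [hβ']; simp [Finset.sum_add_distrib]
        push_cast at hn; omega
      · exact hp'
      · rw [hβo x hxj, hx1]
      · apply Conn_of hC x
        intro z hz
        have hzj : z ≠ j := by rintro rfl; exact hz hβj
        have key : ∀ z, Reach C β j z → z = j ∨ Reach C β' x z := by
          intro z hr
          induction hr with
          | refl => exact Or.inl rfl
          | @tail u v _ huv ihu =>
            obtain ⟨h1, h2, h3⟩ := huv
            by_cases hv : v = j
            · exact Or.inl hv
            right
            by_cases hu : u = j
            · by_cases hvx : v = x
              · rw [hvx]; exact Relation.ReflTransGen.refl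
              · have := hother v hvx hv h2
                rw [hu] at h3; omega
            · refine (ihu.resolve_left hu).tail ⟨?_, ?_, h3⟩
              · rwa [hβo u hu]
              · rwa [hβo v hv]
        exact (key z (hc j z (by omega) (by rwa [hβo z hzj] at hz))).resolve_left hzj
      · intro i hix
        by_cases hij : i = j
        · rw [hij, hBj']; norm_num
        · by_cases hi0 : β i = 0
          · exact B_nonpos hC hp' (by rw [hβo i hij, hi0])
          · rw [hβ', B_add, hother i hix hij hi0]
            have := hB i hij
            omega
    refine U.raise' hjj hU hBj' one_pos ?_
    rw [hβ', add_assoc, ← Pi.single_add]; simp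

lemma G.toU (hC : Ok C) {j : I} {β : I → ℤ} (h : G C j β) : U C β := by
  induction h with
  | base β hp hj hc hB =>
    have hs := Finset.sum_nonneg (fun x (_ : x ∈ Finset.univ) => hp x)
    exact base_U_aux hC ((∑ x, β x).toNat + 1) β j (by push_cast; omega) hp hj hc hB
  | raise i β hij hi hG hB ih => exact U.raise i β hi ih hB

lemma U.toG_aux (hC : Ok C) {j : I} (n : ℕ) : ∀ (β : I → ℤ), ∑ x, β x < n →
    U C β → β j = 1 → G C j β := by
  induction n with
  | zero =>
    intro β hn hU
    have := Finset.sum_nonneg (fun x (_ : x ∈ Finset.univ) => hU.nonneg x)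
    exfalso; push_cast at hn; omega
  | succ n ih =>
    intro β hn hU hj
    by_cases hB : ∀ i, i ≠ j → B C β i ≤ 0
    · exact G.base β hU.nonneg hj (hU.conn hC) hB
    push Not at hB
    obtain ⟨i, hij, hBi⟩ := hB
    have hi : C i i = 2 := by
      rcases hC.diag i with h | h
      · exact h
      · have := B_nonpos' hC hU.nonneg h
        omega
    rcases hU.lower hC hi hBi with h | h
    · rw [h] at hj; simp [hij.symm] at hj
    · set β' := β + Pi.single i (-B C β i) with hβ'
      have hG : G C j β' := by
        apply ih β' _ h
        · simp [hβ', hij.symm, hj]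
        · have : ∑ x, β' x = ∑ x, β x + (-B C β i) := by
            rw [hβ']; simp [Finset.sum_add_distrib]
          push_cast at hn; omega
      have hB' : B C β' i = - B C β i := by rw [hβ', B_add, hi]; ring
      have := G.raise i β' hij hi hG (by omega)
      convert this using 1
      rw [hB', hβ', add_assoc, ← Pi.single_add]; simp

lemma U.toG (hC : Ok C) {j : I} {β : I → ℤ} (hU : U C β) (hj : β j = 1) : G C j β := by
  have hs := Finset.sum_nonneg (fun x (_ : x ∈ Finset.univ) => hU.nonneg x)
  exact U.toG_aux hC ((∑ x, β x).toNat + 1) β (by push_cast; omega) hU hj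

end one

section two

variable {I I' : Type} [Fintype I] [DecidableEq I] [Fintype I'] [DecidableEq I']

/-- The gluing situation. -/
structure Glue (C : I → I → ℤ) (C' : I' → I' → ℤ) (f : I' → I) (J : Set I) (j' : I') :
    Prop where
  ok : Ok C
  ok' : Ok C'
  inj : Function.Injective f
  jJ : f j' ∈ J
  fK : ∀ x, x ≠ j' → f x ∉ J
  surj : ∀ y, y ∉ J → ∃ x, x ≠ j' ∧ f x = y
  hC : ∀ x y, (x ≠ j' ∨ y ≠ j') → C' x y = C (f x) (f y)
  hz : ∀ x y, x ∈ J → y ∉ J → x ≠ f j' → C x y = 0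

variable {C : I → I → ℤ} {C' : I' → I' → ℤ} {f : I' → I} {J : Set I} {j' : I'}

lemma Glue.Bf (g : Glue C C' f J j') (β : I → ℤ) {y : I'} (hy : y ≠ j') :
    B C β (f y) = B C' (β ∘ f) y := by
  symm
  apply Fintype.sum_of_injective f g.inj
  · intro x hx
    have hxJ : x ∈ J := by
      by_contra h
      obtain ⟨z, _, hz⟩ := g.surj x h
      exact hx ⟨z, hz⟩
    rw [g.hz x (f y) hxJ (g.fK y hy) (fun h => hx ⟨j', h.symm⟩), mul_zero]
  · intro x
    simp [g.hC x y (Or.inr hy)]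

lemma Glue.BJ (g : Glue C C' f J j') (β : I → ℤ) {i : I} (hi : i ∈ J) (hij : i ≠ f j') :
    B C (J.indicator β) i = B C β i := by
  apply Finset.sum_congr rfl
  intro x _
  by_cases hx : x ∈ J
  · rw [Set.indicator_of_mem hx]
  · rw [Set.indicator_of_notMem hx, g.ok.symm, g.hz i x hi hx hij]; simp

lemma ind_add_mem (β : I → ℤ) {i : I} (hi : i ∈ J) (c : ℤ) :
    J.indicator (β + Pi.single i c) = J.indicator β + Pi.single i c := by
  classical
  ext x
  by_cases hx : x = i
  · subst hx; simp [hi]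
  · simp [Set.indicator_apply, hx]

lemma ind_add_not (β : I → ℤ) {i : I} (hi : i ∉ J) (c : ℤ) :
    J.indicator (β + Pi.single i c) = J.indicator β := by
  classical
  ext x
  by_cases hx : x = i
  · subst hx; simp [hi]
  · simp [Set.indicator_apply, hx]

lemma Glue.comp_mem (g : Glue C C' f J j') (β : I → ℤ) {i : I} (hi : i ∈ J) (hij : i ≠ f j')
    (c : ℤ) : (β + Pi.single i c) ∘ f = β ∘ f := by
  ext x
  have : f x ≠ i := by
    rintro rfl
    by_cases h : x = j'
    · exact hij (by rw [h])
    · exact g.fK x h hi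
  simp [this]

lemma Glue.comp_f (g : Glue C C' f J j') (β : I → ℤ) (y : I')
    (c : ℤ) : (β + Pi.single (f y) c) ∘ f = β ∘ f + Pi.single y c := by
  ext x
  by_cases h : x = y
  · subst h; simp
  · simp [h, g.inj.ne h]

lemma Glue.fwd (g : Glue C C' f J j') {β : I → ℤ} (h : G C (f j') β) :
    G C (f j') (J.indicator β) ∧ G C' j' (β ∘ f) := by
  classical
  induction h with
  | base β hp hj hc hB =>
    have hp' : ∀ i, 0 ≤ J.indicator β i := by
      intro i; by_cases h : i ∈ J <;> simp [h, hp]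
    have key : ∀ z, Reach C β (f j') z →
        (z ∈ J → Reach C (J.indicator β) (f j') z) ∧
        (∀ z', f z' = z → Reach C' (β ∘ f) j' z') := by
      intro z hr
      induction hr with
      | refl =>
        refine ⟨fun _ => Relation.ReflTransGen.refl, fun z' hz' => ?_⟩
        rw [g.inj hz']; exact Relation.ReflTransGen.refl
      | @tail u v _ huv ihu =>
        obtain ⟨h1, h2, h3⟩ := huv
        constructor
        · intro hv
          by_cases hvj : v = f j'
          · rw [hvj]; exact Relation.ReflTransGen.refl
          have hu : u ∈ J := by
            by_contra hu
            have := g.hz v u hv hu hvj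
            rw [g.ok.symm] at this; omega
          refine (ihu.1 hu).tail ⟨?_, ?_, h3⟩
          · simpa [hu] using h1
          · simpa [hv] using h2
        · intro v' hv'
          by_cases hvj : v' = j'
          · rw [hvj]; exact Relation.ReflTransGen.refl
          have hvJ : v ∉ J := hv' ▸ g.fK v' hvj
          have : ∃ u', f u' = u := by
            by_cases hu : u ∈ J
            · refine ⟨j', ?_⟩
              by_contra hne
              have := g.hz u v hu hvJ (Ne.symm hne)
              omega
            · obtain ⟨u', _, hu'⟩ := g.surj u hu
              exact ⟨u', hu'⟩
          obtain ⟨u', hu'⟩ := this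
          refine (ihu.2 u' hu').tail ⟨?_, ?_, ?_⟩
          · simpa [hu'] using h1
          · simpa [hv'] using h2
          · rw [g.hC u' v' (Or.inr hvj), hu', hv']; exact h3
    refine ⟨G.base _ hp' ?_ ?_ ?_, G.base _ (fun i => hp _) hj ?_ ?_⟩
    · simpa [g.jJ] using hj
    · apply Conn_of g.ok (f j')
      intro i hi
      have hiJ : i ∈ J := by by_contra h; simp [h] at hi
      exact (key i (hc _ _ (by omega) (by simpa [hiJ] using hi))).1 hiJ
    · intro i hij
      by_cases hi : i ∈ J
      · rw [g.BJ β hi hij]; exact hB i hij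
      · exact B_nonpos g.ok hp' (by simp [hi])
    · apply Conn_of g.ok' j'
      intro i hi
      exact (key (f i) (hc _ _ (by omega) hi)).2 i rfl
    · intro i hij
      rw [← g.Bf β hij]
      exact hB _ (g.inj.ne hij)
  | raise i β hij hi hG hB ih =>
    by_cases hiJ : i ∈ J
    · rw [ind_add_mem β hiJ, g.comp_mem β hiJ hij, ← g.BJ β hiJ hij]
      refine ⟨G.raise i _ hij hi ih.1 ?_, ih.2⟩
      rw [g.BJ β hiJ hij]; exact hB
    · obtain ⟨y, hy, rfl⟩ := g.surj i hiJ
      rw [ind_add_not β hiJ, g.comp_f β y, g.Bf β hy]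
      refine ⟨ih.1, G.raise y _ hy ?_ ih.2 ?_⟩
      · rw [g.hC y y (Or.inl hy), hi]
      · rw [← g.Bf β hy]; exact hB

lemma G.raise' {C : I → I → ℤ} {j : I} (i : I) (β : I → ℤ) (hij : i ≠ j) (hi : C i i = 2)
    {c : ℤ} (hG : G C j (β + Pi.single i c)) (hB : B C (β + Pi.single i c) i = c)
    (hc : c < 0) : G C j β := by
  have := G.raise i _ hij hi hG (by omega)
  rw [hB, add_assoc, ← Pi.single_add] at this
  simpa using this

lemma Glue.bwd (g : Glue C C' f J j') {γ : I → ℤ} (h : G C (f j') γ) :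
    (∀ i, i ∉ J → γ i = 0) → ∀ δ, G C' j' δ → ∀ β, J.indicator β = γ → β ∘ f = δ →
    G C (f j') β := by
  classical
  induction h with
  | base γ hp hj hc hB =>
    intro hs δ hδ
    induction hδ with
    | base δ hp' hj' hc' hB' =>
      rintro β rfl rfl
      have hpos : ∀ i, 0 ≤ β i := by
        intro i
        by_cases h : i ∈ J
        · simpa [h] using hp i
        · obtain ⟨y, _, rfl⟩ := g.surj i h
          exact hp' y
      have hβj : β (f j') = 1 := hj'
      refine G.base β hpos hβj ?_ ?_
      · apply Conn_of g.ok (f j')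
        intro i hi
        by_cases h : i ∈ J
        · refine Reach_mono ?_ (hc (f j') i (by omega) (by simpa [h] using hi))
          intro x hx
          by_cases hxJ : x ∈ J
          · simpa [hxJ] using hx
          · simp [hxJ] at hx
        · obtain ⟨y, hyj0, rfl⟩ := g.surj i h
          have := hc' j' y (by omega) hi
          clear hi h hyj0
          induction this with
          | refl => exact Relation.ReflTransGen.refl
          | @tail u v _ huv ihu =>
            obtain ⟨h1, h2, h3⟩ := huv
            by_cases hv : v = j'
            · rw [hv]; exact Relation.ReflTransGen.refl
            refine ihu.tail ⟨h1, h2, ?_⟩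
            rw [← g.hC u v (Or.inr hv)]; exact h3
      · intro i hij
        by_cases h : i ∈ J
        · rw [← g.BJ β h hij]; exact hB i hij
        · obtain ⟨y, hy, rfl⟩ := g.surj i h
          rw [g.Bf β hy]; exact hB' y hy
    | raise y δ hy hyy hG hBy ih =>
      intro β h1 h2
      have e : (β + Pi.single (f y) (B C' δ y)) ∘ f = δ := by
        rw [g.comp_f β y, h2, add_assoc, ← Pi.single_add]; simp
      refine G.raise' (f y) β (g.inj.ne hy) ?_ (ih _ ?_ e) ?_ hBy
      · rw [← g.hC y y (Or.inl hy), hyy]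
      · rw [ind_add_not β (g.fK y hy), h1]
      · rw [g.Bf _ hy, e]
  | raise i γ hij hi hG hBi ih =>
    intro hs δ hδ β h1 h2
    have hp := hG.nonneg
    have hiJ : i ∈ J := by
      by_contra h
      have := hs i h
      have := hp i
      simp at *
      omega
    have e : J.indicator (β + Pi.single i (B C γ i)) = γ := by
      rw [ind_add_mem β hiJ, h1, add_assoc, ← Pi.single_add]; simp
    refine G.raise' i β hij hi (ih ?_ δ hδ _ e ?_) ?_ hBi
    · intro x hx
      have := hs x hx
      have hxi : x ≠ i := by rintro rfl; exact hx hiJ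
      simpa [hxi] using this
    · rw [g.comp_mem β hiJ hij, h2]
    · rw [← g.BJ _ hiJ hij, e]

lemma Glue.resK (g : Glue C C' f J j') {β : I → ℤ} (h : U C β) :
    (∀ i, i ∈ J → β i = 0) → U C' (β ∘ f) := by
  induction h with
  | simple i hi =>
    intro hs
    have hiJ : i ∉ J := fun h => by have := hs i h; simp at this
    obtain ⟨y, hy, rfl⟩ := g.surj i hiJ
    have := g.comp_f 0 y 1
    rw [zero_add] at this
    rw [this]
    have h0 : (0 : I → ℤ) ∘ f = 0 := rfl
    rw [h0, zero_add]
    exact U.simple y (by rw [g.hC y y (Or.inl hy), hi])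
  | fund β h0 hp hc hB =>
    intro hs
    have hK : ∀ i, β i ≠ 0 → ∃ y, y ≠ j' ∧ f y = i := fun i hi =>
      g.surj i (fun h => hi (hs i h))
    refine U.fund _ ?_ (fun i => hp _) ?_ ?_
    · obtain ⟨i, hi⟩ := Function.ne_iff.mp h0
      obtain ⟨y, _, rfl⟩ := hK i hi
      exact Function.ne_iff.mpr ⟨y, hi⟩
    · intro x y hx hy
      have key : ∀ z, Reach C β (f x) z → ∃ z', f z' = z ∧ Reach C' (β ∘ f) x z' := by
        intro z hr
        induction hr with
        | refl => exact ⟨x, rfl, Relation.ReflTransGen.refl⟩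
        | @tail u v _ huv ihu =>
          obtain ⟨h1, h2, h3⟩ := huv
          obtain ⟨u', hu', hr'⟩ := ihu
          obtain ⟨v', hvj, hv'⟩ := hK v h2
          refine ⟨v', hv', hr'.tail ⟨?_, ?_, ?_⟩⟩
          · simpa [hu'] using h1
          · simpa [hv'] using h2
          · rw [g.hC u' v' (Or.inr hvj), hu', hv']; exact h3
      obtain ⟨z', hz, hr⟩ := key (f y) (hc _ _ hx hy)
      rw [← g.inj hz]; exact hr
    · intro i
      by_cases hi : i = j'
      · exact B_nonpos g.ok' (fun i => hp _) (by rw [hi]; exact hs _ g.jJ)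
      · rw [← g.Bf β hi]; exact hB _
  | raise i β hi hU hB ih =>
    intro hs
    have hp := hU.nonneg
    have hiJ : i ∉ J := by
      intro h
      have := hs i h
      have := hp i
      simp at *
      omega
    obtain ⟨y, hy, rfl⟩ := g.surj i hiJ
    rw [g.comp_f β y, g.Bf β hy]
    refine U.raise y _ ?_ (ih ?_) ?_
    · rw [g.hC y y (Or.inl hy), hi]
    · intro x hx
      have := hs x hx
      have hxi : x ≠ f y := by rintro rfl; exact hiJ hx
      simpa [hxi] using this
    · rw [← g.Bf β hy]; exact hB

lemma Glue.extK (g : Glue C C' f J j') {δ : I' → ℤ} (h : U C' δ) :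
    δ j' = 0 → ∀ β, (∀ i, i ∈ J → β i = 0) → β ∘ f = δ → U C β := by
  induction h with
  | simple y hy =>
    intro hj β hs hβ
    have hyj : y ≠ j' := by rintro rfl; simp at hj
    have : β = Pi.single (f y) 1 := by
      ext i
      by_cases hi : i ∈ J
      · have : i ≠ f y := by rintro rfl; exact g.fK y hyj hi
        simp [hs i hi, this]
      · obtain ⟨z, hz, rfl⟩ := g.surj i hi
        have := congrFun hβ z
        simp only [Function.comp] at this
        rw [this]
        by_cases h : z = y
        · subst h; simp
        · simp [h, g.inj.ne h]
    rw [this]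
    exact U.simple _ (by rw [← g.hC y y (Or.inl hyj), hy])
  | fund δ h0 hp hc hB =>
    rintro hj β hs rfl
    have hpos : ∀ i, 0 ≤ β i := by
      intro i
      by_cases h : i ∈ J
      · rw [hs i h]
      · obtain ⟨y, _, rfl⟩ := g.surj i h
        exact hp y
    refine U.fund β (by rintro rfl; exact h0 rfl) hpos ?_ ?_
    · intro x y hx hy
      obtain ⟨x', hx', rfl⟩ := g.surj x (fun h => hx (hs x h))
      obtain ⟨y', hy', rfl⟩ := g.surj y (fun h => hy (hs y h))
      have := hc x' y' hx hy
      clear hy hy'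
      induction this with
      | refl => exact Relation.ReflTransGen.refl
      | @tail u v _ huv ihu =>
        obtain ⟨h1, h2, h3⟩ := huv
        refine ihu.tail ⟨h1, h2, ?_⟩
        rw [← g.hC u v (Or.inr ?_)]
        · exact h3
        · rintro rfl; exact h2 hj
    · intro i
      by_cases h : i ∈ J
      · exact B_nonpos g.ok hpos (hs i h)
      · obtain ⟨y, hy, rfl⟩ := g.surj i h
        rw [g.Bf β hy]; exact hB y
  | raise y δ hy hU hB ih =>
    intro hj β hs hβ
    have hp := hU.nonneg
    have hyj : y ≠ j' := by
      rintro rfl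
      have := hp y
      simp at *
      omega
    have e : (β + Pi.single (f y) (B C' δ y)) ∘ f = δ := by
      rw [g.comp_f β y, hβ, add_assoc, ← Pi.single_add]; simp
    have hB' : B C (β + Pi.single (f y) (B C' δ y)) (f y) = B C' δ y := by
      rw [g.Bf _ hyj, e]
    have hU' := ih (by simpa [hyj.symm] using hj) (β + Pi.single (f y) (B C' δ y)) (by
      intro x hx
      have hxi : x ≠ f y := by rintro rfl; exact g.fK y hyj hx
      simpa [hxi] using hs x hx) e
    refine U.raise' (c := - B C' δ y) ?_ hU' (by rw [hB']; ring) (by omega) ?_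
    · rw [← g.hC y y (Or.inl hyj), hy]
    · rw [add_assoc, ← Pi.single_add]; simp

lemma Glue.side (g : Glue C C' f J j') {β : I → ℤ} (h : U C β) (hj : β (f j') = 0) :
    (∀ i, i ∈ J → β i = 0) ∨ (∀ i, i ∉ J → β i = 0) := by
  by_contra hcon
  push Not at hcon
  obtain ⟨⟨x, hx, hx0⟩, y, hy, hy0⟩ := hcon
  have hr := h.conn g.ok x y hx0 hy0
  have : y ∈ J := by
    clear hy hy0
    induction hr with
    | refl => exact hx
    | @tail u v _ huv ihu =>
      obtain ⟨h1, h2, h3⟩ := huv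
      by_contra hv
      have := g.hz u v ihu hv (by rintro rfl; exact h1 hj)
      omega
  exact hy this

end two

end RC

namespace FinQuiver

/-- The Cartan matrix. -/
def CM (Q : FinQuiver) (x y : Q.I) : ℤ :=
  (if x = y then 2 else 0) - ∑ a : Q.A,
    ((if Q.h a = x ∧ Q.t a = y then 1 else 0) + (if Q.t a = x ∧ Q.h a = y then 1 else 0))

variable (Q : FinQuiver)

lemma CM_sum_nonneg (x y : Q.I) : 0 ≤ ∑ a : Q.A,
    ((if Q.h a = x ∧ Q.t a = y then (1 : ℤ) else 0) +
      (if Q.t a = x ∧ Q.h a = y then 1 else 0)) := by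
  apply Finset.sum_nonneg
  intro a _
  split_ifs <;> norm_num

lemma CM_sum_zero (x y : Q.I) : (∑ a : Q.A,
    ((if Q.h a = x ∧ Q.t a = y then (1 : ℤ) else 0) +
      (if Q.t a = x ∧ Q.h a = y then 1 else 0)) = 0) ↔ ¬ Q.Adj x y := by
  rw [Finset.sum_eq_zero_iff_of_nonneg]
  · unfold Adj
    push Not
    constructor
    · intro h a
      have := h a (Finset.mem_univ _)
      by_cases h1 : Q.h a = x ∧ Q.t a = y
      · rw [if_pos h1] at this
        split_ifs at this <;> omega
      · rw [if_neg h1] at this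
        by_cases h2 : Q.t a = x ∧ Q.h a = y
        · rw [if_pos h2] at this
          omega
        · exact ⟨fun e1 e2 => h1 ⟨e1, e2⟩, fun e1 e2 => h2 ⟨e2, e1⟩⟩
    · intro h a _
      have := h a
      have h1 : ¬ (Q.h a = x ∧ Q.t a = y) := by tauto
      have h2 : ¬ (Q.t a = x ∧ Q.h a = y) := by tauto
      simp [h1, h2]
  · intro a _
    split_ifs <;> norm_num

lemma CM_loopfree (i : Q.I) : Q.Loopfree i ↔ Q.CM i i = 2 := by
  have h := Q.CM_sum_zero i i
  have h2 : Q.Loopfree i ↔ ¬ Q.Adj i i := by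
    unfold Loopfree Adj
    push Not
    simp
  rw [h2, ← h]
  unfold CM
  simp only [if_true]
  omega

lemma CM_ok : RC.Ok Q.CM where
  symm x y := by
    unfold CM
    congr 1
    · simp [eq_comm]
    · apply Finset.sum_congr rfl
      intro a _
      rw [add_comm]
      simp only [and_comm]
  off x y h := by
    have := Q.CM_sum_nonneg x y
    unfold CM
    rw [if_neg h]
    omega
  diag x := by
    have h0 := Q.CM_sum_nonneg x x
    have e : ∑ a : Q.A,
      ((if Q.h a = x ∧ Q.t a = x then (1 : ℤ) else 0) +
        (if Q.t a = x ∧ Q.h a = x then 1 else 0)) =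
        2 * ∑ a : Q.A, (if Q.h a = x ∧ Q.t a = x then (1 : ℤ) else 0) := by
      rw [Finset.mul_sum]
      apply Finset.sum_congr rfl
      intro a _
      by_cases h1 : Q.h a = x ∧ Q.t a = x
      · rw [if_pos h1, if_pos h1.symm]; rfl
      · rw [if_neg h1, if_neg (fun h => h1 h.symm)]; rfl
    unfold CM
    rw [if_pos rfl]
    rw [e] at h0 ⊢
    omega

lemma CM_adj {x y : Q.I} (h : Q.CM x y < 0) : Q.Adj x y := by
  by_contra h'
  rw [← CM_sum_zero] at h'
  unfold CM at h
  rw [h'] at h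
  split_ifs at h <;> omega

lemma adj_CM {x y : Q.I} (h : Q.Adj x y) (hne : x ≠ y) : Q.CM x y < 0 := by
  have h1 := Q.CM_sum_nonneg x y
  have h2 := (not_iff_not.mpr (Q.CM_sum_zero x y)).mpr (by simpa using h)
  unfold CM
  rw [if_neg hne]
  omega

lemma bil_ev (α : Q.I → ℤ) (i : Q.I) : Q.bil α (Q.ev i) = RC.B Q.CM α i := by
  unfold bil RC.B CM ev
  simp only [mul_sub, Finset.sum_sub_distrib, Finset.mul_sum]
  congr 1
  · simp [mul_comm]
  · rw [Finset.sum_comm, Fintype.sum_sum_type, ← Finset.sum_add_distrib]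
    apply Finset.sum_congr rfl
    intro a _
    simp only [mul_add, Finset.sum_add_distrib]
    congr 1
    · by_cases h : Q.t a = i <;> simp [h, dh, dt]
    · by_cases h : Q.h a = i <;> simp [h, dh, dt]

lemma ev_eq (i : Q.I) : Q.ev i = Pi.single i 1 := by
  ext x; simp [ev, Pi.single_apply]

lemma refl_eq (i : Q.I) (α : Q.I → ℤ) :
    Q.refl i α = α + Pi.single i (-RC.B Q.CM α i) := by
  unfold refl
  rw [bil_ev, ev_eq]
  ext x
  simp [Pi.single_apply]
  split_ifs <;> ring

lemma conn_iff (α : Q.I → ℤ) : Q.SuppConnected α ↔ RC.Conn Q.CM α := by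
  constructor
  · intro h i j hi hj
    have := h i j hi hj
    clear hj
    induction this with
    | refl => exact Relation.ReflTransGen.refl
    | @tail u v _ huv ih =>
      obtain ⟨h1, h2, h3⟩ := huv
      by_cases huv : u = v
      · rw [← huv]; exact ih
      · exact ih.tail ⟨h1, h2, Q.adj_CM h3 huv⟩
  · intro h i j hi hj
    have := h i j hi hj
    clear hj
    induction this with
    | refl => exact Relation.ReflTransGen.refl
    | @tail u v _ huv ih =>
      obtain ⟨h1, h2, h3⟩ := huv
      exact ih.tail ⟨h1, h2, Q.CM_adj h3⟩

lemma fund_U {α : Q.I → ℤ} (h : Q.InFund α) : RC.U Q.CM α := by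
  obtain ⟨h0, hp, hc, hB⟩ := h
  refine RC.U.fund α h0 hp ((Q.conn_iff α).mp hc) ?_
  intro i
  rw [← bil_ev]; exact hB i

lemma root_U {α : Q.I → ℤ} (h : Q.IsRoot α) : RC.U Q.CM α ∨ RC.U Q.CM (-α) := by
  induction h with
  | simple i hi =>
    left
    rw [ev_eq]; exact RC.U.simple i ((Q.CM_loopfree i).mp hi)
  | fund α hα => exact Or.inl (Q.fund_U hα)
  | neg_fund α hα => right; rw [neg_neg]; exact Q.fund_U hα
  | reflect i hi α hα ih =>
    rw [refl_eq]
    rw [CM_loopfree] at hi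
    rcases ih with h | h
    · exact h.refl Q.CM_ok hi
    · have h1 := h.refl Q.CM_ok hi
      have e : -α + Pi.single i (-RC.B Q.CM (-α) i) =
          -(α + Pi.single i (-RC.B Q.CM α i)) := by
        have : RC.B Q.CM (-α) i = - RC.B Q.CM α i := by simp [RC.B]
        rw [this]
        ext x; simp [Pi.single_apply]; split_ifs <;> ring
      rw [e, neg_neg] at h1
      exact h1.symm

lemma U_root {α : Q.I → ℤ} (h : RC.U Q.CM α) : Q.IsRoot α := by
  induction h with
  | simple i hi => rw [← ev_eq]; exact IsRoot.simple i ((Q.CM_loopfree i).mpr hi)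
  | fund β h0 hp hc hB =>
    exact IsRoot.fund β ⟨h0, hp, (Q.conn_iff β).mpr hc, fun i => by rw [bil_ev]; exact hB i⟩
  | raise i β hi hU hB ih =>
    rw [← refl_eq]
    exact IsRoot.reflect i ((Q.CM_loopfree i).mpr hi) β ih

lemma posRoot_iff (α : Q.I → ℤ) : Q.IsPosRoot α ↔ RC.U Q.CM α := by
  constructor
  · rintro ⟨h, hp, h0⟩
    rcases Q.root_U h with h | h
    · exact h
    · exfalso
      apply h0
      ext i
      have h1 := h.nonneg i
      have h2 := hp i
      simp at h1 ⊢
      omega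
  · intro h
    exact ⟨Q.U_root h, h.nonneg, h.ne_zero⟩

variable (K : Type) [Field K]

lemma pair_add (l : Q.I → K) (x y : Q.I → ℤ) :
    Q.pair K l (x + y) = Q.pair K l x + Q.pair K l y := by
  simp [pair, mul_add, Finset.sum_add_distrib]

lemma NR_props (l : Q.I → K) {x : Q.I → ℤ} (h : x ∈ Q.NRplus K l) :
    (∀ i, 0 ≤ x i) ∧ Q.pair K l x = 0 := by
  induction h using AddSubmonoid.closure_induction with
  | mem x hx => exact ⟨hx.1.2.1, hx.2⟩
  | zero => simp [pair]
  | add x y _ _ hx hy =>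
    exact ⟨fun i => add_nonneg (hx.1 i) (hy.1 i), by rw [pair_add, hx.2, hy.2, add_zero]⟩

lemma NR_add (l : Q.I → K) {x y : Q.I → ℤ} (hx : x ∈ Q.NRplus K l)
    (hy : y ∈ Q.NRplus K l) : x + y ∈ Q.NRplus K l :=
  (AddSubmonoid.closure (Q.Rplus K l)).add_mem hx hy

lemma NR_zero (l : Q.I → K) : 0 ∈ Q.NRplus K l :=
  (AddSubmonoid.closure (Q.Rplus K l)).zero_mem

lemma NR_of (l : Q.I → K) {x : Q.I → ℤ} (hx : x ∈ Q.Rplus K l) : x ∈ Q.NRplus K l :=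
  AddSubmonoid.subset_closure hx

lemma NR_split (l : Q.I → K) (j : Q.I) {x : Q.I → ℤ} (h : x ∈ Q.NRplus K l) :
    x j = 1 → ∃ γ y, γ ∈ Q.Rplus K l ∧ y ∈ Q.NRplus K l ∧ γ j = 1 ∧ y j = 0 ∧ x = γ + y := by
  induction h using AddSubmonoid.closure_induction with
  | mem x hx => intro h; exact ⟨x, 0, hx, Q.NR_zero K l, h, rfl, by simp⟩
  | zero => simp
  | add x y hx' hy' hx hy =>
    intro h
    have h1 := (Q.NR_props K l hx').1 j
    have h2 := (Q.NR_props K l hy').1 j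
    simp only [Pi.add_apply] at h
    rcases (by omega : (x j = 1 ∧ y j = 0) ∨ (x j = 0 ∧ y j = 1)) with ⟨h3, h4⟩ | ⟨h3, h4⟩
    · obtain ⟨γ, z, hγ, hz, e1, e2, rfl⟩ := hx h3
      exact ⟨γ, z + y, hγ, Q.NR_add K l hz hy', e1, by simp [e2, h4], by abel⟩
    · obtain ⟨γ, z, hγ, hz, e1, e2, rfl⟩ := hy h4
      exact ⟨γ, x + z, hγ, Q.NR_add K l hx' hz, e1, by simp [e2, h3], by abel⟩

end FinQuiver

/-- The abstract gluing statement. -/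
theorem glue_main (Q Q' : FinQuiver) (K : Type) [Field K] (l : Q.I → K) (m : Q'.I → K)
    (f : Q'.I → Q.I) (J : Set Q.I) (j' : Q'.I) (g : RC.Glue Q.CM Q'.CM f J j')
    (hm0 : m j' = 0) (hm : ∀ x, x ≠ j' → m x = l (f x))
    (α : Q.I → ℤ) (hαj : α (f j') = 1) (hlJ : Q.pair K l (J.indicator α) = 0) :
    α ∈ Q.NRplus K l ↔
      (J.indicator α ∈ Q.NRplus K l ∧ α ∘ f ∈ Q'.NRplus K m) := by
  classical
  -- the weights split
  have hpair : ∀ β : Q.I → ℤ,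
      Q.pair K l β = Q.pair K l (J.indicator β) + Q'.pair K m (β ∘ f) := by
    intro β
    have e : Q'.pair K m (β ∘ f) = ∑ i, (if i ∈ J then 0 else l i * (β i : K)) := by
      apply Fintype.sum_of_injective f g.inj
      · intro i hi
        rw [if_pos]
        by_contra h
        obtain ⟨x, _, hx⟩ := g.surj i h
        exact hi ⟨x, hx⟩
      · intro x
        by_cases hx : x = j'
        · rw [hx, hm0, if_pos g.jJ, zero_mul]
        · rw [if_neg (g.fK x hx), hm x hx]; rfl
    rw [e]
    unfold FinQuiver.pair
    rw [← Finset.sum_add_distrib]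
    apply Finset.sum_congr rfl
    intro i _
    by_cases h : i ∈ J <;> simp [h]
  constructor
  · intro h
    have key : ∀ x ∈ Q.NRplus K l,
        (x (f j') = 0 → Q.pair K l (J.indicator x) = 0) ∧
        (x (f j') ≤ 1 → Q.pair K l (J.indicator x) = 0 →
          J.indicator x ∈ Q.NRplus K l ∧ x ∘ f ∈ Q'.NRplus K m) := by
      intro x hx
      induction hx using AddSubmonoid.closure_induction with
      | mem β hβ =>
        have hU := (Q.posRoot_iff β).mp hβ.1
        have hside0 : (∀ i, i ∈ J → β i = 0) → J.indicator β = 0 := by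
          intro h; ext i; by_cases hi : i ∈ J <;> simp [hi, h]
        have hside1 : (∀ i, i ∉ J → β i = 0) → J.indicator β = β := by
          intro h; ext i; by_cases hi : i ∈ J <;> simp [hi, h]
        have hside2 : (∀ i, i ∉ J → β i = 0) → β (f j') = 0 → β ∘ f = 0 := by
          intro h h0; ext x
          by_cases hx : x = j'
          · simp [hx, h0]
          · simp [h _ (g.fK x hx)]
        constructor
        · intro h0
          rcases g.side hU h0 with h | h
          · rw [hside0 h]; simp [FinQuiver.pair]
          · rw [hside1 h]; exact hβ.2
        · intro h1 hp
          have hnn := hU.nonneg (f j')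
          have hpK : Q'.pair K m (β ∘ f) = 0 := by
            have := hpair β
            rw [hp, hβ.2, zero_add] at this
            exact this.symm
          rcases (by omega : β (f j') = 0 ∨ β (f j') = 1) with h0 | h0
          · rcases g.side hU h0 with h | h
            · rw [hside0 h]
              refine ⟨Q.NR_zero K l, Q'.NR_of K m ⟨?_, hpK⟩⟩
              exact (Q'.posRoot_iff _).mpr (g.resK hU h)
            · rw [hside1 h, hside2 h h0]
              exact ⟨Q.NR_of K l hβ, Q'.NR_zero K m⟩
          · obtain ⟨hG1, hG2⟩ := g.fwd (hU.toG g.ok h0)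
            exact ⟨Q.NR_of K l ⟨(Q.posRoot_iff _).mpr (hG1.toU g.ok), hp⟩,
              Q'.NR_of K m ⟨(Q'.posRoot_iff _).mpr (hG2.toU g.ok'), hpK⟩⟩
      | zero =>
        have e : J.indicator (0 : Q.I → ℤ) = 0 := by ext i; simp
        rw [e]
        refine ⟨fun _ => by simp [FinQuiver.pair], fun _ _ => ⟨Q.NR_zero K l, ?_⟩⟩
        exact Q'.NR_zero K m
      | add x y hx' hy' hx hy =>
        have e : J.indicator (x + y) = J.indicator x + J.indicator y := by
          ext i; by_cases hi : i ∈ J <;> simp [hi]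
        have e' : (x + y) ∘ f = x ∘ f + y ∘ f := rfl
        have h1 := (Q.NR_props K l hx').1 (f j')
        have h2 := (Q.NR_props K l hy').1 (f j')
        rw [e, e', Q.pair_add, Pi.add_apply]
        constructor
        · intro h
          rw [hx.1 (by omega), hy.1 (by omega), add_zero]
        · intro h hp
          have hxy : Q.pair K l (J.indicator x) = 0 ∧ Q.pair K l (J.indicator y) = 0 := by
            rcases (by omega : x (f j') = 0 ∨ y (f j') = 0) with h0 | h0
            · have := hx.1 h0
              rw [this, zero_add] at hp
              exact ⟨this, hp⟩
            · have := hy.1 h0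
              rw [this, add_zero] at hp
              exact ⟨hp, this⟩
          obtain ⟨a1, a2⟩ := hx.2 (by omega) hxy.1
          obtain ⟨b1, b2⟩ := hy.2 (by omega) hxy.2
          exact ⟨Q.NR_add K l a1 b1, Q'.NR_add K m a2 b2⟩
    exact (key α h).2 (by omega) hlJ
  · rintro ⟨h1, h2⟩
    -- extension by zero
    let ext0 : (Q'.I → ℤ) → (Q.I → ℤ) := fun y i =>
      if h : i ∉ J then y (g.surj i h).choose else 0
    have hextJ : ∀ y i, i ∈ J → ext0 y i = 0 := by
      intro y i hi; simp [ext0, hi]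
    have hextK : ∀ y x, x ≠ j' → ext0 y (f x) = y x := by
      intro y x hx
      have hfx := g.fK x hx
      have := (g.surj (f x) hfx).choose_spec.2
      simp only [ext0, hfx, not_false_eq_true, dif_pos]
      rw [g.inj this]
    have hext : ∀ y, y j' = 0 → ext0 y ∘ f = y := by
      intro y hy
      ext x
      by_cases hx : x = j'
      · subst hx; simp [hextJ y _ g.jJ, hy]
      · simp [hextK y x hx]
    have hextadd : ∀ x y, ext0 (x + y) = ext0 x + ext0 y := by
      intro x y; ext i
      by_cases hi : i ∈ J <;> simp [ext0, hi]
    have hextind : ∀ y, J.indicator (ext0 y) = 0 := by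
      intro y; ext i
      by_cases hi : i ∈ J
      · simp [hi, hextJ y i hi]
      · simp [hi]
    have hextNR : ∀ y ∈ Q'.NRplus K m, y j' = 0 → ext0 y ∈ Q.NRplus K l := by
      intro y hy
      induction hy using AddSubmonoid.closure_induction with
      | mem y hy =>
        intro h0
        refine Q.NR_of K l ⟨(Q.posRoot_iff _).mpr ?_, ?_⟩
        · exact g.extK ((Q'.posRoot_iff _).mp hy.1) h0 _ (hextJ y) (hext y h0)
        · rw [hpair, hext y h0, hextind, hy.2]
          simp [FinQuiver.pair]
      | zero =>
        intro _
        have : ext0 0 = 0 := by ext i; simp [ext0]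
        rw [this]; exact Q.NR_zero K l
      | add x y hx' hy' hx hy =>
        intro h0
        have a1 := (Q'.NR_props K m hx').1 j'
        have a2 := (Q'.NR_props K m hy').1 j'
        rw [Pi.add_apply] at h0
        rw [hextadd]
        exact Q.NR_add K l (hx (by omega)) (hy (by omega))
    have hindj : (J.indicator α) (f j') = 1 := by rw [Set.indicator_of_mem g.jJ, hαj]
    obtain ⟨γ, y, hγ, hy, hγj, hyj, e1⟩ := Q.NR_split K l (f j') h1 hindj
    obtain ⟨δ, z, hδ, hz, hδj, hzj, e2⟩ := Q'.NR_split K m j' h2 hαj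
    have hγs : ∀ i, i ∉ J → γ i = 0 := by
      intro i hi
      have a := congrFun e1 i
      have b1 := hγ.1.2.1 i
      have b2 := (Q.NR_props K l hy).1 i
      simp [hi] at a
      omega
    have hUγ := ((Q.posRoot_iff _).mp hγ.1).toG g.ok hγj
    have hUδ := ((Q'.posRoot_iff _).mp hδ.1).toG g.ok' hδj
    have i1 : J.indicator (γ + ext0 δ) = γ := by
      ext i
      by_cases hi : i ∈ J
      · simp [hi, hextJ δ i hi]
      · simp [hi, hγs i hi]
    have i2 : (γ + ext0 δ) ∘ f = δ := by
      ext x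
      by_cases hx : x = j'
      · subst hx; simp [hextJ δ _ g.jJ, hγj, hδj]
      · simp [hextK δ x hx, hγs _ (g.fK x hx)]
    have hroot : γ + ext0 δ ∈ Q.Rplus K l := by
      refine ⟨(Q.posRoot_iff _).mpr ((g.bwd hUγ hγs δ hUδ _ i1 i2).toU g.ok), ?_⟩
      rw [hpair, i1, i2, hγ.2, hδ.2, add_zero]
    have hfin : α = (γ + ext0 δ) + (y + ext0 z) := by
      ext i
      by_cases hi : i ∈ J
      · have := congrFun e1 i
        simp [hi] at this
        simp [hextJ _ i hi, this]
      · obtain ⟨x, hx, rfl⟩ := g.surj i hi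
        have a := congrFun e1 (f x)
        have b := congrFun e2 x
        simp [hi] at a b
        simp [hextK _ x hx, b]
        omega
    rw [hfin]
    exact Q.NR_add K l (Q.NR_of K l hroot) (Q.NR_add K l hy (hextNR z hz hzj))

/-- with a unique arrow `b` between `𝒥` and `𝒦` joining `j ∈ 𝒥` to
`k ∈ 𝒦`, let `Q̃` be the quiver on `𝒦 ∪ {j}` consisting of `b` and all arrows with
head and tail in `𝒦`, and let `μ` agree with `λ` on `𝒦` with `μ_j = 0`.  If
`α_j = 1` and `λ·α_𝒥 = λ·α_𝒦 = 0`, then `α ∈ ℕR_λ^+` iff `α_𝒥 ∈ ℕR_λ^+` and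
`ε_j + α_𝒦 ∈ ℕR_μ^+` (for `Q̃`). -/
theorem stmt19 (Q : FinQuiver) (K : Type) [Field K] [CharZero K] [IsAlgClosed K]
    (l : Q.I → K) (J Kv : Set Q.I)
    (hdisj : ∀ i, ¬ (i ∈ J ∧ i ∈ Kv)) (hcover : ∀ i, i ∈ J ∨ i ∈ Kv)
    (j k : Q.I) (hj : j ∈ J) (hk : k ∈ Kv) (b : Q.A)
    (hb : (Q.h b = j ∧ Q.t b = k) ∨ (Q.h b = k ∧ Q.t b = j))
    (huniq : ∀ a : Q.A,
      ((Q.h a ∈ J ∧ Q.t a ∈ Kv) ∨ (Q.h a ∈ Kv ∧ Q.t a ∈ J)) → a = b)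
    (α αJ αK : Q.I → ℤ)
    (hsum : α = αJ + αK)
    (hsJ : ∀ i, αJ i ≠ 0 → i ∈ J) (hsK : ∀ i, αK i ≠ 0 → i ∈ Kv)
    (hpos : ∀ i, 0 ≤ α i) (hαj : α j = 1)
    (hlJ : Q.pair K l αJ = 0) (hlK : Q.pair K l αK = 0) :
    α ∈ Q.NRplus K l ↔
      (αJ ∈ Q.NRplus K l ∧
        (fun i => Q.ev j i.1 + αK i.1) ∈
          (Q.restrict (Kv ∪ {j}) ({a | Q.h a ∈ Kv ∧ Q.t a ∈ Kv} ∪ {b})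
            (by
              intro a ha
              rcases ha with h1 | he
              · exact Or.inl h1.1
              · have hab : a = b := he
                rcases hb with ⟨h1, h2⟩ | ⟨h1, h2⟩
                · exact Or.inr (by rw [hab]; exact h1)
                · exact Or.inl (by rw [hab, h1]; exact hk))
            (by
              intro a ha
              rcases ha with h1 | he
              · exact Or.inl h1.2
              · have hab : a = b := he
                rcases hb with ⟨h1, h2⟩ | ⟨h1, h2⟩
                · exact Or.inl (by rw [hab, h2]; exact hk)
                · exact Or.inr (by rw [hab]; exact h2))).NRplus K
          (fun i => if i.1 = j then 0 else l i.1)) := by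
  classical
  set R := (Q.restrict (Kv ∪ {j}) ({a | Q.h a ∈ Kv ∧ Q.t a ∈ Kv} ∪ {b}) _ _) with hR
  have hjK : j ∉ Kv := fun h => hdisj j ⟨hj, h⟩
  have hnJ : ∀ i, i ∉ J → i ∈ Kv := fun i hi => (hcover i).resolve_left hi
  have hKnJ : ∀ i, i ∈ Kv → i ∉ J := fun i hi h => hdisj i ⟨h, hi⟩
  let f : R.I → Q.I := fun i => i.1
  let j' : R.I := ⟨j, Or.inr rfl⟩
  have hfinj : Function.Injective f := fun x y h => Subtype.ext h
  have hfK : ∀ x : R.I, x ≠ j' → f x ∈ Kv := by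
    intro x hx
    rcases x.2 with h | h
    · exact h
    · have h' : x.1 = j := h
      exact absurd (Subtype.ext h') hx
  have hg : RC.Glue Q.CM R.CM f J j' := by
    refine ⟨Q.CM_ok, R.CM_ok, hfinj, hj, fun x hx => hKnJ _ (hfK x hx), ?_, ?_, ?_⟩
    · intro y hy
      refine ⟨⟨y, Or.inl (hnJ y hy)⟩, ?_, rfl⟩
      intro h
      have : y = j := congrArg f h
      exact hy (this ▸ hj)
    · intro x y hxy
      unfold FinQuiver.CM
      congr 1
      · simp [hfinj.eq_iff]
      · apply Fintype.sum_of_injective (fun a : R.A => (a.1 : Q.A)) Subtype.val_injective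
        · intro a ha
          have haB : a ∉ ({a | Q.h a ∈ Kv ∧ Q.t a ∈ Kv} ∪ {b} : Set Q.A) :=
            fun h => ha ⟨⟨a, h⟩, rfl⟩
          have hab : a ≠ b := fun h => haB (Or.inr h)
          have key : ∀ u v : R.I, (u ≠ j' ∨ v ≠ j') → ¬ (Q.h a = f u ∧ Q.t a = f v) := by
            rintro u v huv ⟨e1, e2⟩
            by_cases hu : u = j'
            · have hv := hfK v (huv.resolve_left (fun h => h hu))
              exact hab (huniq a (Or.inl ⟨by rw [e1, hu]; exact hj, by rw [e2]; exact hv⟩))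
            · have hu' := hfK u hu
              by_cases hv : v = j'
              · exact hab (huniq a (Or.inr ⟨by rw [e1]; exact hu', by rw [e2, hv]; exact hj⟩))
              · exact haB (Or.inl ⟨by rw [e1]; exact hu', by rw [e2]; exact hfK v hv⟩)
          have k1 := key x y hxy
          have k2 := key y x hxy.symm
          rw [if_neg k1, if_neg (fun h => k2 h.symm), add_zero]
        · intro a
          have e1 : ∀ u : R.I, R.h a = u ↔ Q.h a.1 = f u := fun u =>
            ⟨fun h => congrArg f h, fun h => Subtype.ext h⟩
          have e2 : ∀ u : R.I, R.t a = u ↔ Q.t a.1 = f u := fun u =>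
            ⟨fun h => congrArg f h, fun h => Subtype.ext h⟩
          simp only [e1, e2]
    · intro x y hx hy hxj
      have hyK := hnJ y hy
      have hxy : x ≠ y := by rintro rfl; exact hy hx
      have h0 : ¬ Q.Adj x y := by
        rintro ⟨a, h⟩
        have hab : a = b := by
          apply huniq
          rcases h with ⟨e1, e2⟩ | ⟨e1, e2⟩
          · exact Or.inl ⟨e1 ▸ hx, e2 ▸ hyK⟩
          · exact Or.inr ⟨e1 ▸ hyK, e2 ▸ hx⟩
        subst hab
        have hkJ := hKnJ k hk
        have hxj' : x ≠ j := hxj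
        rcases h with ⟨e1, e2⟩ | ⟨e1, e2⟩ <;> rcases hb with ⟨e3, e4⟩ | ⟨e3, e4⟩
        · exact hxj' (e1.symm.trans e3)
        · exact hkJ (e3 ▸ e1 ▸ hx)
        · exact hkJ (e4 ▸ e2 ▸ hx)
        · exact hxj' (e2.symm.trans e4)
      rw [← Q.CM_sum_zero] at h0
      unfold FinQuiver.CM
      rw [h0, if_neg hxy]; rfl
  have hJz : ∀ i, i ∉ J → αJ i = 0 := fun i hi => by_contra fun h => hi (hsJ i h)
  have hKz : ∀ i, i ∈ J → αK i = 0 := fun i hi => by_contra fun h => hdisj i ⟨hi, hsK i h⟩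
  have eJ : J.indicator α = αJ := by
    ext i
    by_cases hi : i ∈ J
    · simp [hi, hsum, hKz i hi]
    · simp [hi, hJz i hi]
  have eK : (fun i : R.I => Q.ev j i.1 + αK i.1) = α ∘ f := by
    ext i
    by_cases hi : i = j'
    · subst hi
      have : α (f j') = 1 := hαj
      have h2 : αK j = 0 := hKz j hj
      simp only [Function.comp, this]
      change Q.ev j j + αK j = 1
      simp [FinQuiver.ev, h2]
    · have hiK := hfK i hi
      have hne : f i ≠ j := fun h => hjK (h ▸ hiK)
      have h2 : αJ (f i) = 0 := hJz _ (hKnJ _ hiK)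
      change Q.ev j (f i) + αK (f i) = α (f i)
      rw [hsum]
      simp [FinQuiver.ev, h2, hne]
  have := glue_main Q R K l (fun i : R.I => if i.1 = j then 0 else l i.1) f J j' hg
    (if_pos rfl) (fun x hx => if_neg (fun h => hx (Subtype.ext h))) α hαj (by rw [eJ]; exact hlJ)
  rw [eJ, ← eK] at this
  convert this

end
end
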